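/- arXiv:1402.1228 — 3 statements merged into one kernel-verified Lean document; each statement's English description precedes it below -/
import Mathlib

section
/- Let p be a prime with p ≡ 1 (mod 8) such that (2/p)₄ = (p/2)₄ = −1, and write p = e² + 16f² with e, f ∈ ℤ. Set π₁ = e + 4fi and π₂ = e − 4fi in ℤ[i]. Let H, H₁, H₂ be the prime ideals of O_k lying above 1+i, π₁, π₂ respectively (so H² = (1+i)O_k, H₁² = π₁O_k, H₂² = π₂O_k). Then [H] = [H₁] = [H₂] in Cl(k), and this common class has order 2. -/
/-!
By the law of quadratic reciprocity `2a² - pb² = -1` would force `(2/p)₄ = 1`, and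
`2a² - pb² = 1` is impossible because `p ≡ 9 (mod 16)`. Descent from the fundamental solution of
`x² - 2py² = 1` therefore produces a solution of `x² - 2py² = -1`.

The ideal classes agree because suitable products are squares up to units: `√(2p)² = 2π₁π₂` and
`2 = -i(1 + i)²` give `[H₁] = [H₂]`. In `ℤ[i]`, the factorization `(x + i)(x - i) = 2py²` shows
that `x + i` is `(1 + i)πz²` up to a unit, with `π = π₁` or `π = π₂`. As `x + y√(2p)` is a unit,
the identity `(x + i + y√(2p))² = 2(x + i)(x + y√(2p))` gives `[H] = [H₁]` or `[H] = [H₂]`.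

If `H` were generated by `β`, then the relative norm of `β` to `ℚ(√(2p))` would be an element of
`ℤ[√(2p)]` of norm `±2`, that is a solution of `2a² - pb² = ±1`.
-/

/- STATEMENT 0: For a prime p ≡ 1 (mod 8) with (2/p)₄ = (p/2)₄ = −1, writing p = e² + 16f²,
π₁ = e + 4fi, π₂ = e − 4fi, and letting H, H₁, H₂ be the prime ideals of O_k (k = ℚ(√(2p), i))
above 1+i, π₁, π₂ (i.e. H² = (1+i)O_k, H₁² = π₁O_k, H₂² = π₂O_k), the classes of H, H₁, H₂
in Cl(k) coincide and have order 2. -/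

open Complex NumberField IntermediateField Polynomial nonZeroDivisors

noncomputable section

lemma integral_of_pow_rat {x : ℂ} {n : ℕ} (hn : n ≠ 0) {q : ℚ} (h : x ^ n = (q : ℂ)) :
    IsIntegral ℚ x := by
  refine ⟨X ^ n - C q, monic_X_pow_sub_C q hn, ?_⟩
  simp [h]

/-- The field k = ℚ(√(2p), i) as a subfield of ℂ. -/
def kfield (p : ℕ) : IntermediateField ℚ ℂ := ℚ⟮(Real.sqrt (2 * p) : ℂ), (Complex.I : ℂ)⟯

instance (p : ℕ) : FiniteDimensional ℚ (kfield p) := by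
  apply IntermediateField.finiteDimensional_adjoin
  rintro x hx
  simp only [Set.mem_insert_iff, Set.mem_singleton_iff] at hx
  rcases hx with rfl | rfl
  · refine integral_of_pow_rat two_ne_zero (q := 2 * p) ?_
    push_cast
    norm_cast
    exact_mod_cast Real.sq_sqrt (by positivity)
  · exact integral_of_pow_rat two_ne_zero (q := -1) (by simp [Complex.I_sq])

instance (p : ℕ) : NumberField (kfield p) := ⟨⟩

open scoped NumberTheorySymbols

/-! ### The equations `2a² - pb² = ±1` -/

lemma jacobiSym_eq_one_of_dvd_mul_sq_sub_one {c t : ℤ} {m : ℕ} (h : (m : ℤ) ∣ c * t ^ 2 - 1) :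
    J(c | m) = 1 := by
  have hct : J(c * t ^ 2 | m) = 1 :=
    (jacobiSym.mod_left' (Int.modEq_iff_dvd.mpr h).symm).trans (jacobiSym.one_left m)
  rw [jacobiSym.mul_left, jacobiSym.pow_left] at hct
  rcases jacobiSym.trichotomy t m with ht | ht | ht <;> simp_all

/-- If `2a² - nb² = 1`, then `2` is a square modulo `b`, so that `b ≡ ±1 (mod 8)` and
`nb² ≡ n (mod 16)`. -/
lemma two_mul_sq_sub_mul_sq_ne_one {n : ℤ} (hn : n % 16 = 9) (a b : ℤ) :
    2 * a ^ 2 - n * b ^ 2 ≠ 1 := by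
  intro h
  have hb : Odd b.natAbs := by
    rw [Int.natAbs_odd]
    have : Odd (n * b ^ 2) := ⟨a ^ 2 - 1, by linarith⟩
    exact Int.odd_pow.mp (Int.odd_mul.mp this).2 |>.resolve_right two_ne_zero
  have hJ : J(2 | b.natAbs) = 1 :=
    jacobiSym_eq_one_of_dvd_mul_sq_sub_one (t := a) (Int.natAbs_dvd.mpr ⟨n * b, by linarith⟩)
  have hb8 : b % 8 = 1 ∨ b % 8 = 7 := by
    rw [jacobiSym.at_two hb, ZMod.χ₈_nat_eq_if_mod_eight] at hJ
    split_ifs at hJ <;> omega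
  have hb16 : b ^ 2 % 16 = 1 := by
    have : b % 16 = 1 ∨ b % 16 = 7 ∨ b % 16 = 9 ∨ b % 16 = 15 := by omega
    rcases this with h | h | h | h <;> simp [pow_two, Int.mul_emod, h]
  have ha : a ^ 2 % 8 = 5 := by
    have : n * b ^ 2 % 16 = 9 := by simp [Int.mul_emod, hb16, hn]
    omega
  have : a % 8 = 0 ∨ a % 8 = 1 ∨ a % 8 = 2 ∨ a % 8 = 3 ∨ a % 8 = 4 ∨ a % 8 = 5 ∨ a % 8 = 6 ∨
    a % 8 = 7 := by omega
  rcases this with h | h | h | h | h | h | h | h <;> simp [pow_two, Int.mul_emod, h] at ha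

lemma jacobiSym_eq_one_of_two_mul_sq_add_one_eq {n b : ℕ} {a : ℤ} (hn : n % 4 = 1)
    (h : 2 * a ^ 2 + 1 = n * b ^ 2) : J(a | n) = 1 := by
  have hnb : n * b ^ 2 = 2 * a.natAbs ^ 2 + 1 := by
    zify
    rw [sq_abs, h]
  have hodd : Odd (n * b ^ 2) := ⟨a.natAbs ^ 2, hnb⟩
  have hb : Odd b := (Nat.odd_pow_iff two_ne_zero).mp (Nat.odd_mul.mp hodd).2
  obtain ⟨k, hk⟩ : Even a.natAbs := by
    have hnb4 : n * b ^ 2 % 4 = 1 := by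
      rw [Nat.mul_mod, hn, one_mul, Nat.mod_mod]
      exact_mod_cast Int.sq_mod_four_eq_one_of_odd (mod_cast hb : Odd (b : ℤ))
    exact (Nat.even_pow.mp (Nat.even_iff.mpr (by omega : a.natAbs ^ 2 % 2 = 0))).1
  have hmod : n * b ^ 2 % (4 * a.natAbs) = 1 % (4 * a.natAbs) := by
    rw [show n * b ^ 2 = 4 * a.natAbs * k + 1 by rw [hnb, pow_two]; nth_rw 2 [hk]; ring]
    exact Nat.mul_add_mod ..
  have hJ : J(a | n * b ^ 2) = 1 := by
    rw [jacobiSym.mod_right a hodd, hmod, ← jacobiSym.mod_right a odd_one, jacobiSym.one_right]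
  rw [jacobiSym.mul_right' _ (by omega) (pow_ne_zero 2 hb.pos.ne'), jacobiSym.pow_right] at hJ
  rcases jacobiSym.trichotomy a b with hab | hab | hab <;> simp_all

lemma two_mul_sq_sub_mul_sq_ne_neg_one {p : ℕ} (hp : p.Prime) (hp8 : p % 8 = 1)
    (h2p4 : (2 : ZMod p) ^ ((p - 1) / 4) = -1) (a b : ℤ) : 2 * a ^ 2 - p * b ^ 2 ≠ -1 := by
  intro h
  have := Fact.mk hp
  have : Fact (2 < p) := ⟨by have := hp.two_le; omega⟩
  have hJ : J(a | p) = 1 :=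
    jacobiSym_eq_one_of_two_mul_sq_add_one_eq (b := b.natAbs) (by omega)
      (by rw [Int.natCast_natAbs, sq_abs]; linarith)
  have hmod : (2 * a ^ 2 : ZMod p) = -1 := by simpa using congrArg (Int.cast : ℤ → ZMod p) h
  have hEuler : (2 : ZMod p) ^ ((p - 1) / 4) * (J(a | p) : ℤ) = 1 := by
    have hev : Even ((p - 1) / 4) := ⟨(p - 1) / 8, by omega⟩
    rw [← jacobiSym.legendreSym.to_jacobiSym, legendreSym.eq_pow,
      show p / 2 = 2 * ((p - 1) / 4) by omega, pow_mul, ← mul_pow, hmod, hev.neg_one_pow]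
  rw [hJ, h2p4, Int.cast_one, mul_one] at hEuler
  exact ZMod.neg_one_ne_one hEuler

/-! ### The negative Pell equation -/

lemma exists_mul_eq_of_mul_succ_eq {d t v : ℕ} (hd : d ≠ 0) (h : t * (t + 1) = d * v ^ 2) :
    ∃ m n a b : ℕ, m * n = d ∧ t + 1 = m * a ^ 2 ∧ t = n * b ^ 2 := by
  have hcop : Nat.Coprime (t + 1) t := by simp
  have hmn : d.gcd (t + 1) * d.gcd t = d := by
    rw [← hcop.gcd_mul, mul_comm, h, Nat.gcd_mul_right_right]
  obtain ⟨r, hr⟩ := Nat.gcd_dvd_right d (t + 1)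
  obtain ⟨q, hq⟩ := Nat.gcd_dvd_right d t
  have hrq : r * q = v ^ 2 := by
    apply Nat.eq_of_mul_eq_mul_left (Nat.pos_of_ne_zero hd)
    calc d * (r * q) = d.gcd (t + 1) * r * (d.gcd t * q) := by nth_rw 1 [← hmn]; ring
      _ = d * v ^ 2 := by rw [← hr, ← hq, mul_comm, h]
  have hrq_unit : IsUnit (gcd r q) := Nat.isUnit_iff.mpr <|
    Nat.Coprime.coprime_dvd_left ⟨_, hr.trans (mul_comm _ _)⟩
      (Nat.Coprime.coprime_dvd_right ⟨_, hq.trans (mul_comm _ _)⟩ hcop)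
  obtain ⟨b, hb⟩ := exists_eq_pow_of_mul_eq_pow (gcd_comm r q ▸ hrq_unit) (mul_comm r q ▸ hrq)
  obtain ⟨a, ha⟩ := exists_eq_pow_of_mul_eq_pow hrq_unit hrq
  exact ⟨_, _, a, b, hmn, ha ▸ hr, hb ▸ hq⟩

lemma exists_mul_succ_eq_of_sq_eq_mul_sq_add_one {d x y : ℕ} (hd : d % 4 = 2)
    (h : x ^ 2 = d * y ^ 2 + 1) : ∃ t v : ℕ, x = 2 * t + 1 ∧ t * (t + 1) = d * v ^ 2 := by
  obtain ⟨d, rfl⟩ : 2 ∣ d := by omega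
  have hd2 : Odd d := Nat.odd_iff.mpr (by omega)
  obtain ⟨t, rfl⟩ : Odd x := (Nat.odd_pow_iff two_ne_zero).mp ⟨d * y ^ 2, by rw [h, mul_assoc]⟩
  have ht : 2 * (t * (t + 1)) = d * y ^ 2 := by linarith
  obtain ⟨v, rfl⟩ : 2 ∣ y := Nat.prime_two.dvd_of_dvd_pow <|
    (Nat.coprime_two_left.mpr hd2).dvd_of_dvd_mul_left ⟨_, ht.symm⟩
  exact ⟨t, v, rfl, by linarith⟩

/-- The solution `(a, b)` comes from the fundamental solution `(2t + 1, 2v)` of `x² - dy² = 1`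
by splitting `t(t + 1) = dv²`; if `m = 1`, it is a smaller solution of the same equation. -/
lemma exists_mul_sq_eq_mul_sq_add_one {d : ℕ} (hd : d % 4 = 2) :
    ∃ m n a b : ℕ, m * n = d ∧ m ≠ 1 ∧ m * a ^ 2 = n * b ^ 2 + 1 := by
  have hsq : ¬IsSquare (d : ℤ) := by
    rintro ⟨c, hc⟩
    rcases Int.even_or_odd' c with ⟨c, rfl | rfl⟩ <;> ring_nf at hc <;> omega
  obtain ⟨s, hx, hy, hmin⟩ := Pell.IsFundamental.exists_of_not_isSquare (by omega) hsq
  obtain ⟨x, hxs⟩ := Int.eq_ofNat_of_zero_le (zero_le_one.trans hx.le)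
  obtain ⟨y, hys⟩ := Int.eq_ofNat_of_zero_le hy.le
  obtain ⟨t, v, rfl, htv⟩ := exists_mul_succ_eq_of_sq_eq_mul_sq_add_one hd (x := x) (y := y) <| by
    have := s.prop_x
    rw [hxs, hys] at this
    exact_mod_cast this.trans (add_comm _ _)
  obtain ⟨m, n, a, b, hmn, ha, hb⟩ := exists_mul_eq_of_mul_succ_eq (by omega) htv
  refine ⟨m, n, a, b, hmn, ?_, by omega⟩
  rintro rfl
  obtain rfl : n = d := by omega
  have hle := @hmin (Pell.Solution₁.mk a b (by zify at ha hb; linarith))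
    (by rw [Pell.Solution₁.x_mk]; zify at hxs ha; nlinarith)
  rw [hxs, Pell.Solution₁.x_mk] at hle
  have : 2 * t + 1 ≤ a := mod_cast hle
  nlinarith

lemma exists_sq_sub_two_mul_mul_sq_eq_neg_one {p : ℕ} (hp : p.Prime) (hp2 : p ≠ 2)
    (hpos : ∀ a b : ℤ, 2 * a ^ 2 - p * b ^ 2 ≠ 1) (hneg : ∀ a b : ℤ, 2 * a ^ 2 - p * b ^ 2 ≠ -1) :
    ∃ x y : ℤ, x ^ 2 - 2 * p * y ^ 2 = -1 := by
  have hp_odd := Nat.odd_iff.mp (hp.odd_of_ne_two hp2)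
  obtain ⟨m, n, a, b, hmn, hm, h⟩ := exists_mul_sq_eq_mul_sq_add_one (d := 2 * p) (by omega)
  have h' : (m * a ^ 2 - n * b ^ 2 : ℤ) = 1 := by zify at h; linarith
  obtain ⟨k, l, hk, hl, rfl⟩ := Nat.dvd_mul.mp (Dvd.intro n hmn)
  rcases (Nat.dvd_prime Nat.prime_two).mp hk with rfl | rfl <;>
    rcases (Nat.dvd_prime hp).mp hl with rfl | rfl
  · exact (hm rfl).elim
  · obtain rfl : n = 2 := Nat.eq_of_mul_eq_mul_left hp.pos (by linarith)
    exact (hneg b a (by push_cast at h'; linarith)).elim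
  · obtain rfl : n = p := by omega
    exact (hpos a b (by push_cast at h'; linarith)).elim
  · obtain rfl : n = 1 := Nat.eq_of_mul_eq_mul_left (mul_pos two_pos hp.pos) (by linarith)
    exact ⟨b, a, by push_cast at h'; linarith⟩

/-! ### Relative norms to a real quadratic field -/

lemma exists_intCast_eq_of_isIntegral {q : ℚ} (hq : IsIntegral ℤ q) : ∃ n : ℤ, (n : ℚ) = q :=
  IsIntegrallyClosed.isIntegral_iff.mp hq

lemma exists_intCast_eq_of_squarefree_mul_sq {d m : ℤ} (hd : Squarefree d) {q : ℚ}
    (h : d * q ^ 2 = m) : ∃ n : ℤ, (n : ℚ) = q := by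
  have hsq : (d * q) ^ 2 = (d * m : ℤ) := by
    rw [Int.cast_mul, ← h]
    ring
  obtain ⟨t, ht⟩ : ∃ t : ℤ, (t : ℚ) = d * q :=
    exists_intCast_eq_of_isIntegral (.of_pow two_pos (by rw [hsq]; exact isIntegral_algebraMap))
  rw [← ht] at hsq
  obtain ⟨n, rfl⟩ : d ∣ t := (hd.dvd_pow_iff_dvd two_ne_zero).mp ⟨m, mod_cast hsq⟩
  have hd0 : (d : ℚ) ≠ 0 := mod_cast hd.ne_zero
  exact ⟨n, mul_left_cancel₀ hd0 (mod_cast ht)⟩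

lemma even_and_even_of_sq_sub_mul_sq_eq_four_mul {d t c m : ℤ} (hd : Squarefree d)
    (hd4 : d % 4 ≠ 1) (h : t ^ 2 - d * c ^ 2 = 4 * m) : Even t ∧ Even c := by
  have hd0 : d % 4 ≠ 0 := fun h0 => by
    have := Int.isUnit_iff.mp (hd 2 (Int.dvd_of_emod_eq_zero h0))
    omega
  rcases Int.even_or_odd' t with ⟨t, rfl | rfl⟩ <;> rcases Int.even_or_odd' c with ⟨c, rfl | rfl⟩
  · simp
  all_goals
    ring_nf at h
    omega

lemma exists_eq_mk_intCast_of_isIntegral {d : ℤ} (hd : Squarefree d) (hd4 : d % 4 ≠ 1)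
    {z : QuadraticAlgebra ℚ (d : ℚ) 0} (hz : IsIntegral ℤ z) : ∃ m n : ℤ, z = ⟨m, n⟩ := by
  have hz' : IsIntegral ℤ (star z) := hz.map (starRingEnd _).toIntAlgHom
  obtain ⟨t, ht⟩ : ∃ t : ℤ, (t : ℚ) = 2 * z.re := by
    have h := hz.add hz'
    rw [← QuadraticAlgebra.algebraMap_trace_eq_add_star,
      isIntegral_algebraMap_iff QuadraticAlgebra.algebraMap_injective] at h
    simpa [QuadraticAlgebra.trace_def] using exists_intCast_eq_of_isIntegral h
  obtain ⟨m, hm⟩ : ∃ m : ℤ, (m : ℚ) = z.re ^ 2 - d * z.im ^ 2 := by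
    have h := hz.mul hz'
    rw [← QuadraticAlgebra.algebraMap_norm_eq_mul_star,
      isIntegral_algebraMap_iff QuadraticAlgebra.algebraMap_injective] at h
    simpa [QuadraticAlgebra.norm_def, pow_two, mul_assoc] using exists_intCast_eq_of_isIntegral h
  obtain ⟨c, hc⟩ := exists_intCast_eq_of_squarefree_mul_sq hd (q := 2 * z.im) (m := t ^ 2 - 4 * m)
    (by push_cast; rw [ht, hm]; ring)
  have htc : t ^ 2 - d * c ^ 2 = 4 * m := by
    qify
    rw [ht, hm, hc]
    ring
  obtain ⟨⟨t, rfl⟩, ⟨c, rfl⟩⟩ := even_and_even_of_sq_sub_mul_sq_eq_four_mul hd hd4 htc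
  refine ⟨t, c, QuadraticAlgebra.ext ?_ ?_⟩ <;> push_cast at ht hc <;> dsimp only <;> linarith

lemma not_isSquare_of_squarefree {d : ℤ} (hd : Squarefree d) (hd1 : d ≠ 1) : ¬IsSquare d := by
  rintro ⟨c, rfl⟩
  have hc : IsUnit c := hd c dvd_rfl
  exact hd1 (Int.isUnit_mul_self hc)

/-- The subalgebra `S + Si` of `ℂ`, for a subalgebra `S` of `ℝ`. With `S = ℚ(√(2p))` it contains
`k`, and `z ↦ zz̄` maps it to `S`. -/
def complexification (S : Subalgebra ℚ ℝ) : Subalgebra ℚ ℂ where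
  carrier := {z | z.re ∈ S ∧ z.im ∈ S}
  mul_mem' hz hw := ⟨sub_mem (mul_mem hz.1 hw.1) (mul_mem hz.2 hw.2),
    add_mem (mul_mem hz.1 hw.2) (mul_mem hz.2 hw.1)⟩
  add_mem' hz hw := ⟨add_mem hz.1 hw.1, add_mem hz.2 hw.2⟩
  algebraMap_mem' q := by
    simpa using S.algebraMap_mem q

lemma normSq_mem_of_mem_complexification {S : Subalgebra ℚ ℝ} {z : ℂ}
    (hz : z ∈ complexification S) : normSq z ∈ S :=
  add_mem (mul_mem hz.1 hz.1) (mul_mem hz.2 hz.2)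

lemma isIntegral_normSq {z : ℂ} (hz : IsIntegral ℤ z) : IsIntegral ℤ (normSq z) := by
  have h : IsIntegral ℤ ((normSq z : ℝ) : ℂ) := by
    rw [← mul_conj]
    exact hz.mul (hz.map (starRingEnd ℂ).toIntAlgHom)
  exact (isIntegral_algHom_iff ofRealHom.toIntAlgHom ofReal_injective).mp h

/-- The embedding of `ℚ(√d)` into `ℝ` that sends the generator to the positive square root;
it identifies `ℚ(√d)`, realised as a `QuadraticAlgebra`, with a subfield of `ℝ`. -/
def quadraticToReal {d : ℤ} (hd : 0 ≤ d) : QuadraticAlgebra ℚ (d : ℚ) 0 →ₐ[ℚ] ℝ :=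
  QuadraticAlgebra.lift ⟨√(d : ℝ), by
    rw [Real.mul_self_sqrt (by exact_mod_cast hd)]; simp [Algebra.smul_def]⟩

lemma quadraticToReal_apply {d : ℤ} (hd : 0 ≤ d) (z : QuadraticAlgebra ℚ (d : ℚ) 0) :
    quadraticToReal hd z = z.re + z.im * √(d : ℝ) := by
  simp [quadraticToReal, QuadraticAlgebra.lift, Algebra.smul_def]

lemma quadraticToReal_injective {d : ℤ} (hd : 0 ≤ d) (hsq : ¬IsSquare d) :
    Function.Injective (quadraticToReal hd) := by
  have : Fact (∀ r : ℚ, r ^ 2 ≠ (d : ℚ) + 0 * r) := ⟨fun r hr => hsq <|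
    Rat.isSquare_intCast_iff.mp ⟨r, by linarith⟩⟩
  exact (quadraticToReal hd).injective

lemma exists_toReal_eq_of_isIntegral {d : ℤ} (hd0 : 0 ≤ d) (hd : Squarefree d) (hd4 : d % 4 ≠ 1)
    {x : ℝ} (hx : IsIntegral ℤ x) (hmem : x ∈ (quadraticToReal hd0).range) :
    ∃ g : ℤ√d, Zsqrtd.toReal hd0 g = x := by
  obtain ⟨z, rfl⟩ := hmem
  have hsq : ¬IsSquare d := not_isSquare_of_squarefree hd (by rintro rfl; simp at hd4)
  obtain ⟨m, n, rfl⟩ := exists_eq_mk_intCast_of_isIntegral hd hd4 <|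
    (isIntegral_algHom_iff ((quadraticToReal hd0).restrictScalars ℤ)
      (quadraticToReal_injective hd0 hsq)).mp hx
  exact ⟨⟨m, n⟩, by simp [quadraticToReal_apply]⟩

/-- The values `zz̄` are integers of `ℚ(√d)`, hence lie in `ℤ[√d]` because `d ≢ 1 (mod 4)`. -/
lemma exists_monoidHom_zsqrtd_toReal_eq_normSq {d : ℤ} (hd0 : 0 ≤ d) (hd : Squarefree d)
    (hd4 : d % 4 ≠ 1) {K : IntermediateField ℚ ℂ}
    (hK : K.toSubalgebra ≤ complexification (quadraticToReal hd0).range) :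
    ∃ N : 𝓞 K →* ℤ√d, ∀ z, Zsqrtd.toReal hd0 (N z) = normSq (z : K) := by
  have hinj : Function.Injective (Zsqrtd.toReal hd0) := Zsqrtd.toReal_injective hd0 fun n hn =>
    not_isSquare_of_squarefree hd (by rintro rfl; simp at hd4) ⟨n, hn⟩
  have hN (z : 𝓞 K) : ∃ g : ℤ√d, Zsqrtd.toReal hd0 g = normSq (z : K) :=
    exists_toReal_eq_of_isIntegral hd0 hd hd4
      (isIntegral_normSq <| z.isIntegral_coe.map (K.val.restrictScalars ℤ))
      (normSq_mem_of_mem_complexification (hK z.1.2))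
  choose N hN using hN
  exact ⟨{ toFun := N
           map_one' := hinj (by simp [hN])
           map_mul' := fun z w => hinj (by simp only [map_mul, hN, MulMemClass.coe_mul]) }, hN⟩

lemma kfield_le_complexification {p : ℕ} (h : (0 : ℤ) ≤ 2 * p) :
    (kfield p).toSubalgebra ≤ complexification (quadraticToReal h).range := by
  have halg : ∀ x ∈ ({(√(2 * p) : ℂ), I} : Set ℂ), IsAlgebraic ℚ x := fun x hx =>
    (Algebra.IsAlgebraic.isAlgebraic (⟨x, subset_adjoin ℚ _ hx⟩ : kfield p)).algebraMap
  rw [kfield, adjoin_toSubalgebra_of_isAlgebraic halg, Algebra.adjoin_le_iff]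
  rintro x (rfl | rfl)
  · exact ⟨⟨QuadraticAlgebra.omega, by simp [quadraticToReal_apply]⟩, zero_mem _⟩
  · exact ⟨zero_mem _, one_mem _⟩

lemma natAbs_norm_ne_two {p : ℤ} (hpos : ∀ a b : ℤ, 2 * a ^ 2 - p * b ^ 2 ≠ 1)
    (hneg : ∀ a b : ℤ, 2 * a ^ 2 - p * b ^ 2 ≠ -1) (g : ℤ√(2 * p)) : g.norm.natAbs ≠ 2 := by
  intro h
  have hg : g.re ^ 2 - 2 * (p * g.im ^ 2) = g.norm := by
    rw [Zsqrtd.norm_def]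
    ring
  obtain ⟨r, hr⟩ : Even g.re :=
    (Int.even_pow.mp (Int.even_iff.mpr (by omega : g.re ^ 2 % 2 = 0))).1
  rw [hr] at hg
  rcases Int.natAbs_eq g.norm with hn | hn <;> rw [h] at hn
  · exact hpos r g.im (by push_cast at hn; linarith)
  · exact hneg r g.im (by push_cast at hn; linarith)

lemma not_associated_sq_two {p : ℤ} (hpos : ∀ a b : ℤ, 2 * a ^ 2 - p * b ^ 2 ≠ 1)
    (hneg : ∀ a b : ℤ, 2 * a ^ 2 - p * b ^ 2 ≠ -1) (g : ℤ√(2 * p)) : ¬Associated (g ^ 2) 2 := by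
  intro h
  have hnorm := h.map (Zsqrtd.normMonoidHom (d := 2 * p))
  have h2 : Zsqrtd.normMonoidHom (2 : ℤ√(2 * p)) = 2 ^ 2 := Zsqrtd.norm_natCast 2
  rw [map_pow, h2, Int.associated_iff_natAbs, Int.natAbs_pow, Int.natAbs_pow] at hnorm
  exact natAbs_norm_ne_two hpos hneg g (Nat.pow_left_injective two_ne_zero hnorm)

lemma squarefree_two_mul {p : ℕ} (hp : p.Prime) (hp2 : p ≠ 2) : Squarefree (2 * p : ℤ) := by
  have h : Squarefree (2 * p) := Nat.squarefree_mul
    ((Nat.coprime_primes Nat.prime_two hp).mpr hp2.symm) |>.mpr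
    ⟨Nat.prime_two.prime.squarefree, hp.prime.squarefree⟩
  exact_mod_cast Int.squarefree_natCast.mpr h

/-- The relative norm of `1 + i` to `ℚ(√(2p))` is `2`. -/
lemma not_associated_sq_of_coe_eq_one_add_I {p : ℕ} (hp : p.Prime) (hp2 : p ≠ 2)
    (hpos : ∀ a b : ℤ, 2 * a ^ 2 - p * b ^ 2 ≠ 1)
    (hneg : ∀ a b : ℤ, 2 * a ^ 2 - p * b ^ 2 ≠ -1) {α : 𝓞 (kfield p)}
    (hα : ((α : kfield p) : ℂ) = 1 + I) (β : 𝓞 (kfield p)) : ¬Associated (β ^ 2) α := by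
  intro h
  have h0 : (0 : ℤ) ≤ 2 * p := by positivity
  have hsf := squarefree_two_mul hp hp2
  have hmod : (2 * p : ℤ) % 4 ≠ 1 := by omega
  obtain ⟨N, hN⟩ := exists_monoidHom_zsqrtd_toReal_eq_normSq h0 hsf hmod
    (kfield_le_complexification h0)
  have hNα : N α = 2 := by
    apply Zsqrtd.toReal_injective h0 fun n hn => not_isSquare_of_squarefree hsf (by omega) ⟨n, hn⟩
    rw [hN, hα, map_ofNat]
    norm_num [normSq_apply]
  have hassoc := h.map N
  rw [map_pow, hNα] at hassoc
  exact not_associated_sq_two hpos hneg _ hassoc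

/-! ### Comparing ideal classes -/

lemma mk0_eq_mk0_of_associated {R : Type*} [CommRing R] [IsDedekindDomain R] {I J : (Ideal R)⁰}
    {α β a b : R} (hI : (I : Ideal R) ^ 2 = Ideal.span {α})
    (hJ : (J : Ideal R) ^ 2 = Ideal.span {β}) (ha : a ≠ 0) (hb : b ≠ 0)
    (h : Associated (a ^ 2 * α) (b ^ 2 * β)) :
    ClassGroup.mk0 I = ClassGroup.mk0 J := by
  rw [ClassGroup.mk0_eq_mk0_iff]
  refine ⟨a, b, ha, hb, ?_⟩
  have hsq : (Ideal.span {a} * (I : Ideal R)) ^ 2 = (Ideal.span {b} * (J : Ideal R)) ^ 2 := by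
    simp only [mul_pow, hI, hJ, Ideal.span_singleton_pow, Ideal.span_singleton_mul_span_singleton]
    exact Ideal.span_singleton_eq_span_singleton.mpr h
  have hdvd {A B : Ideal R} (h : A ^ 2 = B ^ 2) : A ∣ B :=
    (UniqueFactorizationMonoid.pow_dvd_pow_iff_dvd two_ne_zero).mp h.dvd
  exact associated_iff_eq.mp (associated_of_dvd_dvd (hdvd hsq) (hdvd hsq.symm))

lemma orderOf_mk0_eq_two {R : Type*} [CommRing R] [IsDedekindDomain R] {I : (Ideal R)⁰} {α : R}
    (hI : (I : Ideal R) ^ 2 = Ideal.span {α}) (hα : ∀ β : R, ¬Associated (β ^ 2) α) :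
    orderOf (ClassGroup.mk0 I) = 2 := by
  refine orderOf_eq_prime ?_ fun h => ?_
  · rw [← map_pow, ClassGroup.mk0_eq_one_iff]
    exact ⟨⟨α, by simpa using hI⟩⟩
  · obtain ⟨β, hβ⟩ := ((ClassGroup.mk0_eq_one_iff I.2).mp h).principal
    rw [Ideal.submodule_span_eq] at hβ
    rw [hβ, Ideal.span_singleton_pow, Ideal.span_singleton_eq_span_singleton] at hI
    exact hα β hI

lemma associated_two_one_add_sq {R : Type*} [CommRing R] {i : R} (hi : i ^ 2 = -1) :
    Associated 2 ((1 + i) ^ 2) := by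
  have hi_unit : IsUnit i := .of_mul_eq_one (-i) (by linear_combination -hi)
  have hsq : (1 + i) ^ 2 = 2 * i := by linear_combination hi
  rw [hsq]
  exact (associated_mul_unit_left 2 i hi_unit).symm

section ClassComparison

variable {R : Type*} [CommRing R] [IsDedekindDomain R] {i : R} {I J : (Ideal R)⁰}

lemma mk0_eq_mk0_of_sq_eq_two_mul (hi : i ^ 2 = -1) {s α β : R} (hs : s ^ 2 = 2 * (α * β))
    (hs0 : s ≠ 0) (hI : (I : Ideal R) ^ 2 = Ideal.span {α})
    (hJ : (J : Ideal R) ^ 2 = Ideal.span {β}) : ClassGroup.mk0 I = ClassGroup.mk0 J := by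
  have hassoc := associated_two_one_add_sq hi
  have hα : (1 + i) ^ 2 * (α * β) ≠ 0 :=
    ((hassoc.mul_right (α * β)).ne_zero_iff).mp (hs ▸ pow_ne_zero 2 hs0)
  have h1i : (1 + i) * α ≠ 0 := fun h => hα (by linear_combination (1 + i) * β * h)
  refine mk0_eq_mk0_of_associated hI hJ hs0 h1i ?_
  rw [hs, show 2 * (α * β) * α = 2 * (α ^ 2 * β) by ring, mul_pow, mul_assoc]
  exact hassoc.mul_right _

lemma mk0_eq_mk0_of_associated_add_unit (hi : i ^ 2 = -1) (h2 : (2 : R) ≠ 0) {x v ϖ z : R}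
    (hxv : x ^ 2 - v ^ 2 = -1) (hx : x + i ≠ 0) (hϖ : Associated ((1 + i) * ϖ * z ^ 2) (x + i))
    (hI : (I : Ideal R) ^ 2 = Ideal.span {1 + i}) (hJ : (J : Ideal R) ^ 2 = Ideal.span {ϖ}) :
    ClassGroup.mk0 I = ClassGroup.mk0 J := by
  have hsq : (x + i + v) ^ 2 = 2 * (x + i) * (x + v) := by linear_combination hi - hxv
  have hunit : IsUnit (x + v) := .of_mul_eq_one (v - x) (by linear_combination -hxv)
  have hassoc : Associated ((x + i + v) ^ 2) ((1 + i) ^ 2 * ((1 + i) * ϖ * z ^ 2)) := by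
    rw [hsq]
    exact (associated_mul_unit_left _ _ hunit).trans
      ((associated_two_one_add_sq hi).mul_mul hϖ.symm)
  have ha : x + i + v ≠ 0 := by
    have : 2 * (x + i) * (x + v) ≠ 0 := mul_ne_zero (mul_ne_zero h2 hx) hunit.ne_zero
    exact ne_zero_pow two_ne_zero (hsq ▸ this)
  have hb : (1 + i) ^ 2 * z ≠ 0 := by
    intro h
    apply hassoc.ne_zero_iff.mp (pow_ne_zero 2 ha)
    linear_combination (1 + i) * ϖ * z * h
  refine mk0_eq_mk0_of_associated hI hJ ha hb ?_
  rw [show ((1 + i) ^ 2 * z) ^ 2 * ϖ = (1 + i) ^ 2 * ((1 + i) * ϖ * z ^ 2) * (1 + i) by ring]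
  exact hassoc.mul_right _

end ClassComparison

lemma exists_associated_mul_sq {R : Type*} [CommRing R] [IsDomain R] [IsBezout R]
    {a b π ρ y : R} (hab : IsCoprime a b) (hπρ : π * ρ ≠ 0) (hπ : π ∣ a) (hρ : ρ ∣ b)
    (h : a * b = π * ρ * y ^ 2) : ∃ z, Associated (π * z ^ 2) a := by
  obtain ⟨a, rfl⟩ := hπ
  obtain ⟨b, rfl⟩ := hρ
  have hsq : a * b = y ^ 2 := mul_left_cancel₀ hπρ (by rw [← h]; ring)
  obtain ⟨z, hz⟩ :=
    exists_associated_pow_of_mul_eq_pow' hab.of_mul_left_right.of_mul_right_right hsq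
  exact ⟨z, hz.mul_left π⟩

lemma exists_associated_mul_sq_of_prime {R : Type*} [CommRing R] [IsDomain R] [IsBezout R]
    [StarRing R] {w π y : R} (hw : IsCoprime w (star w)) (hπ : Prime π)
    (h : w * star w = π * star π * y ^ 2) :
    ∃ ϖ z, (ϖ = π ∨ ϖ = star π) ∧ Associated (ϖ * z ^ 2) w := by
  have hπ0 : π * star π ≠ 0 := mul_ne_zero hπ.ne_zero (star_ne_zero.mpr hπ.ne_zero)
  have hstar {a b : R} : a ∣ b → star a ∣ star b := map_dvd (starRingEnd R)
  rcases hπ.dvd_or_dvd (⟨star π * y ^ 2, by rw [h, mul_assoc]⟩ : π ∣ w * star w) with hdvd | hdvd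
  · obtain ⟨z, hz⟩ := exists_associated_mul_sq hw hπ0 hdvd (hstar hdvd) h
    exact ⟨π, z, .inl rfl, hz⟩
  · obtain ⟨z, hz⟩ := exists_associated_mul_sq hw (mul_comm π _ ▸ hπ0) (star_star w ▸ hstar hdvd)
      hdvd (mul_comm π _ ▸ h)
    exact ⟨star π, z, .inr rfl, hz⟩

/-- For `w = (r + 1) - ri` one has `(1 + i)w - (1 - i)w̄ = 2i` and `ww̄ = 2r(r + 1) + 1`. -/
lemma isCoprime_star_self (r : ℤ) : IsCoprime (⟨r + 1, -r⟩ : GaussianInt) (star ⟨r + 1, -r⟩) := by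
  refine ⟨⟨0, 1⟩ * ⟨1, 1⟩ * (r * (r + 1) : ℤ),
    ⟨r + 1, -r⟩ - ⟨0, 1⟩ * ⟨1, -1⟩ * (r * (r + 1) : ℤ), ?_⟩
  ext <;> simp <;> ring

lemma prime_of_norm_eq_prime {π : GaussianInt} {p : ℕ} (hp : p.Prime) (hπ : π.norm = p) :
    Prime π := by
  have : IsLocalHom (Zsqrtd.normMonoidHom (d := -1)) :=
    ⟨fun z hz => (Zsqrtd.isUnit_iff_norm_isUnit z).mpr hz⟩
  refine irreducible_iff_prime.mp (.of_map (f := Zsqrtd.normMonoidHom) ?_)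
  rw [show Zsqrtd.normMonoidHom π = (p : ℤ) from hπ]
  exact (Nat.prime_iff_prime_int.mp hp).irreducible

lemma exists_associated_mk_one {p : ℕ} (hp : p.Prime) {e f x y : ℤ}
    (hef : (p : ℤ) = e ^ 2 + f ^ 2) (hxy : x ^ 2 - 2 * p * y ^ 2 = -1) : ∃ ϖ z : GaussianInt,
      (ϖ = ⟨e, f⟩ ∨ ϖ = ⟨e, -f⟩) ∧ Associated (⟨1, 1⟩ * ϖ * z ^ 2) ⟨x, 1⟩ := by
  obtain ⟨r, rfl⟩ : Odd x := by
    have : x ^ 2 = 2 * (p * y ^ 2 - 1) + 1 := by linarith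
    exact Int.odd_pow.mp ⟨_, this⟩ |>.resolve_right two_ne_zero
  have hnorm : (⟨e, f⟩ : GaussianInt).norm = p := by
    rw [Zsqrtd.norm_def, hef]
    ring
  have hw : (⟨r + 1, -r⟩ : GaussianInt) * star ⟨r + 1, -r⟩ =
      ⟨e, f⟩ * star ⟨e, f⟩ * (y : GaussianInt) ^ 2 := by
    have hnormw : (⟨r + 1, -r⟩ : GaussianInt).norm = p * y ^ 2 := by
      rw [Zsqrtd.norm_def]
      linarith
    rw [← Zsqrtd.norm_eq_mul_conj, ← Zsqrtd.norm_eq_mul_conj, hnorm, hnormw]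
    norm_cast
  obtain ⟨ϖ, z, hϖ, hassoc⟩ :=
    exists_associated_mul_sq_of_prime (isCoprime_star_self r) (prime_of_norm_eq_prime hp hnorm) hw
  refine ⟨ϖ, z, hϖ, ?_⟩
  have hx : (⟨2 * r + 1, 1⟩ : GaussianInt) = ⟨1, 1⟩ * ⟨r + 1, -r⟩ := by
    ext <;> simp; ring
  rw [hx, mul_assoc]
  exact hassoc.mul_left _

theorem mk0_eq_mk0_of_sq_sub_two_mul_mul_sq_eq_neg_one {R : Type*} [CommRing R] [IsDedekindDomain R]
    [CharZero R] {p : ℕ} (hp : p.Prime) {e f x y : ℤ} (hef : (p : ℤ) = e ^ 2 + f ^ 2)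
    (hxy : x ^ 2 - 2 * p * y ^ 2 = -1) {i s : R} (hi : i ^ 2 = -1) (hs : s ^ 2 = 2 * p)
    {I I₁ I₂ : (Ideal R)⁰} (hI : (I : Ideal R) ^ 2 = Ideal.span {1 + i})
    (hI₁ : (I₁ : Ideal R) ^ 2 = Ideal.span {e + f * i})
    (hI₂ : (I₂ : Ideal R) ^ 2 = Ideal.span {e - f * i}) :
    ClassGroup.mk0 I = ClassGroup.mk0 I₁ ∧ ClassGroup.mk0 I = ClassGroup.mk0 I₂ := by
  have hefR : (p : R) = e ^ 2 + f ^ 2 := mod_cast congrArg (Int.cast : ℤ → R) hef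
  have hxyR : (x : R) ^ 2 - (y * s) ^ 2 = -1 := by
    have h : (x : R) ^ 2 - 2 * p * y ^ 2 = -1 := mod_cast congrArg (Int.cast : ℤ → R) hxy
    linear_combination h - (y : R) ^ 2 * hs
  have hs0 : s ≠ 0 := ne_zero_pow two_ne_zero <| by
    rw [hs]
    exact_mod_cast mul_ne_zero two_ne_zero hp.ne_zero
  have hxi : (x : R) + i ≠ 0 := fun h => by
    have : (x : R) ^ 2 = -1 := by linear_combination (x - i) * h + hi
    have : x ^ 2 = -1 := mod_cast this
    nlinarith
  have h₁₂ : ClassGroup.mk0 I₁ = ClassGroup.mk0 I₂ :=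
    mk0_eq_mk0_of_sq_eq_two_mul hi
      (by linear_combination hs + 2 * hefR + 2 * (f : R) ^ 2 * hi) hs0 hI₁ hI₂
  obtain ⟨ϖ, z, hϖ, hassoc⟩ := exists_associated_mk_one hp hef hxy
  let φ : GaussianInt →+* R := Zsqrtd.lift ⟨i, by rw [← pow_two, hi]; simp⟩
  have hφ (a b : ℤ) : φ ⟨a, b⟩ = a + b * i := rfl
  have hassocR : Associated ((1 + i) * φ ϖ * φ z ^ 2) (x + i) := by
    have h := hassoc.map φ
    rw [map_mul, map_mul, map_pow, hφ 1 1, hφ x 1] at h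
    simpa only [Int.cast_one, one_mul] using h
  have key {J : (Ideal R)⁰} (hJ : (J : Ideal R) ^ 2 = Ideal.span {φ ϖ}) :
      ClassGroup.mk0 I = ClassGroup.mk0 J :=
    mk0_eq_mk0_of_associated_add_unit hi two_ne_zero hxyR hxi hassocR hI hJ
  rcases hϖ with rfl | rfl
  · have h := key (J := I₁) (by rw [hI₁, hφ])
    exact ⟨h, h.trans h₁₂⟩
  · have h := key (J := I₂) (by rw [hI₂, hφ, Int.cast_neg, neg_mul, sub_eq_add_neg])
    exact ⟨h.trans h₁₂.symm, h⟩

lemma mod_sixteen_eq_nine {n : ℕ} (hn8 : n % 8 = 1) (hn : (-1 : ℤ) ^ ((n - 1) / 8) = -1) :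
    n % 16 = 9 := by
  have := Nat.odd_iff.mp ((neg_one_pow_eq_neg_one_iff_odd (by decide)).mp hn)
  omega

lemma exists_eq_one_add_of_coe_eq_one_add_I {K : IntermediateField ℚ ℂ} {α : 𝓞 K}
    (hα : ((α : K) : ℂ) = 1 + I) : ∃ i : 𝓞 K, ((i : K) : ℂ) = I ∧ i ^ 2 = -1 ∧ α = 1 + i := by
  have hi : ((α - 1 : 𝓞 K) : ℂ) = I := by simp [hα]
  exact ⟨α - 1, hi, RingOfIntegers.ext (Subtype.ext (by simp [hα])), by ring⟩

lemma eq_intCast_add_intCast_mul_of_coe_eq {K : IntermediateField ℚ ℂ} {i z : 𝓞 K}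
    (hi : ((i : K) : ℂ) = I) {e f : ℤ} (hz : ((z : K) : ℂ) = e + f * I) : z = e + f * i :=
  RingOfIntegers.ext (Subtype.ext (by simp [hz, hi]))

lemma exists_sq_eq_natCast {K : IntermediateField ℚ ℂ} {n : ℕ} (hn : (√(n : ℝ) : ℂ) ∈ K) :
    ∃ s : 𝓞 K, s ^ 2 = n := by
  have hsq : (⟨√(n : ℝ), hn⟩ : K) ^ 2 = n :=
    Subtype.val_injective (by simp [← ofReal_pow])
  have hint : IsIntegral ℤ (⟨√(n : ℝ), hn⟩ : K) :=
    .of_pow two_pos (by rw [hsq]; exact isIntegral_natCast n)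
  exact ⟨⟨_, hint⟩, RingOfIntegers.ext hsq⟩

lemma exists_sq_eq_two_mul (p : ℕ) : ∃ s : 𝓞 (kfield p), s ^ 2 = 2 * p := by
  obtain ⟨s, hs⟩ := exists_sq_eq_natCast (K := kfield p) (n := 2 * p)
    (subset_adjoin ℚ _ (.inl (by simp)))
  exact ⟨s, mod_cast hs⟩

theorem statement_0 (p : ℕ) (hp : p.Prime) (hp8 : p % 8 = 1)
    -- (2/p)₄ = −1 :
    (h2p4 : (2 : ZMod p) ^ ((p - 1) / 4) = -1)
    -- (p/2)₄ = −1 :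
    (hp24 : (-1 : ℤ) ^ ((p - 1) / 8) = -1)
    (e f : ℤ) (hef : (p : ℤ) = e ^ 2 + 16 * f ^ 2)
    (H H₁ H₂ : Ideal (𝓞 (kfield p)))
    (hHpr : H.IsPrime) (hH₁pr : H₁.IsPrime) (hH₂pr : H₂.IsPrime)
    (α α₁ α₂ : 𝓞 (kfield p))
    (hα : ((α : kfield p) : ℂ) = 1 + Complex.I)
    (hα₁ : ((α₁ : kfield p) : ℂ) = (e : ℂ) + 4 * (f : ℂ) * Complex.I)
    (hα₂ : ((α₂ : kfield p) : ℂ) = (e : ℂ) - 4 * (f : ℂ) * Complex.I)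
    (hH : H ^ 2 = Ideal.span {α}) (hH₁ : H₁ ^ 2 = Ideal.span {α₁})
    (hH₂ : H₂ ^ 2 = Ideal.span {α₂})
    (h0 : H ∈ (Ideal (𝓞 (kfield p)))⁰) (h1 : H₁ ∈ (Ideal (𝓞 (kfield p)))⁰)
    (h2 : H₂ ∈ (Ideal (𝓞 (kfield p)))⁰) :
    ClassGroup.mk0 ⟨H, h0⟩ = ClassGroup.mk0 ⟨H₁, h1⟩ ∧
    ClassGroup.mk0 ⟨H, h0⟩ = ClassGroup.mk0 ⟨H₂, h2⟩ ∧
    orderOf (ClassGroup.mk0 ⟨H, h0⟩) = 2 := by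
  have hp2 : p ≠ 2 := by omega
  have hpos := two_mul_sq_sub_mul_sq_ne_one (n := p) (mod_cast mod_sixteen_eq_nine hp8 hp24)
  have hneg := two_mul_sq_sub_mul_sq_ne_neg_one hp hp8 h2p4
  obtain ⟨x, y, hxy⟩ := exists_sq_sub_two_mul_mul_sq_eq_neg_one hp hp2 hpos hneg
  obtain ⟨i, hi, hi_sq, rfl⟩ := exists_eq_one_add_of_coe_eq_one_add_I hα
  obtain rfl : α₁ = e + (4 * f : ℤ) * i :=
    eq_intCast_add_intCast_mul_of_coe_eq hi (by rw [hα₁]; norm_num)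
  obtain rfl : α₂ = e - (4 * f : ℤ) * i := by
    rw [sub_eq_add_neg, ← neg_mul, ← Int.cast_neg]
    exact eq_intCast_add_intCast_mul_of_coe_eq hi (by rw [hα₂]; push_cast; ring)
  obtain ⟨s, hs⟩ := exists_sq_eq_two_mul p
  have hclass := mk0_eq_mk0_of_sq_sub_two_mul_mul_sq_eq_neg_one hp (f := 4 * f)
    (by linarith) hxy hi_sq hs (I := ⟨H, h0⟩) (I₁ := ⟨H₁, h1⟩) (I₂ := ⟨H₂, h2⟩) hH hH₁ hH₂
  have horder : orderOf (ClassGroup.mk0 ⟨H, h0⟩) = 2 :=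
    orderOf_mk0_eq_two hH (not_associated_sq_of_coe_eq_one_add_I hp hp2 hpos hneg hα)
  exact ⟨hclass.1, hclass.2, horder⟩
end
end

section
/- Let p be a prime with p ≡ 1 (mod 8), F = ℚ(√p, √2), and let ε₁, ε₂, ε₃ denote the fundamental units of ℚ(√p), ℚ(√2), ℚ(√(2p)) respectively. Then: (i) there exists a unit u ∈ O_F^× with u² = ε₁ε₂ε₃ such that {u, ε₂, ε₃} is a fundamental system of units of F, if and only if ε₃ has norm −1; (ii) there exists a unit u ∈ O_F^× with u² = ε₃ such that {ε₁, ε₂, u} is a fundamental system of units of F, if and only if ε₃ has norm +1. -/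
/- STATEMENT 4: Let p ≡ 1 (mod 8) be prime, F = ℚ(√p, √2), and ε₁, ε₂, ε₃ the fundamental
units of ℚ(√p), ℚ(√2), ℚ(√(2p)). Then:
(i) there is a unit u of F with u² = ε₁ε₂ε₃ and {u, ε₂, ε₃} a fundamental system of units
of F iff N(ε₃) = −1;
(ii) there is a unit u of F with u² = ε₃ and {ε₁, ε₂, u} a fundamental system of units
of F iff N(ε₃) = +1. -/

open Complex NumberField IntermediateField nonZeroDivisors

noncomputable section

/-- The real quadratic field ℚ(√n) as a subfield of ℂ. -/
def Qsqrt (n : ℕ) : IntermediateField ℚ ℂ := ℚ⟮(Real.sqrt n : ℂ)⟯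

/-- The biquadratic field F = ℚ(√p, √2) as a subfield of ℂ. -/
def Fbiq (p : ℕ) : IntermediateField ℚ ℂ := ℚ⟮(Real.sqrt p : ℂ), (Real.sqrt 2 : ℂ)⟯

/-- `ε` is the fundamental unit of a real quadratic field `Q` (a subfield of ℂ):
it is a real number > 1 and generates the unit group modulo ±1. -/
def IsFundamentalUnit {Q : IntermediateField ℚ ℂ} (ε : (𝓞 Q)ˣ) : Prop :=
  (∃ r : ℝ, 1 < r ∧ (((ε : 𝓞 Q) : Q) : ℂ) = (r : ℂ)) ∧
  ∀ u : (𝓞 Q)ˣ, ∃ n : ℤ, u = ε ^ n ∨ u = -ε ^ n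

/-- `{u, v, w}` is a fundamental system of units of the (unit rank 3) field `F`:
together with −1 they generate the full unit group. -/
def IsFundamentalSystem {F : IntermediateField ℚ ℂ} (u v w : (𝓞 F)ˣ) : Prop :=
  ∀ t : (𝓞 F)ˣ, ∃ a b c : ℤ, t = u ^ a * v ^ b * w ^ c ∨ t = -(u ^ a * v ^ b * w ^ c)

/-!
Let `σ` and `τ` generate the Galois group of `F = ℚ(√p, √2)`, with `σ` fixing `√p` and `τ` fixing
`√2`. For a unit `t` of `F` the products `t * σ t`, `t * τ t` and `σ t * τ t` lie in the three
quadratic subfields, and `t ^ 2 = (t * σ t) * (t * τ t) / (σ t * τ t)`, so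
`t ^ 2 = ε₁ ^ a * ε₂ ^ b * ε₃ ^ c`. Since `ε₁` and `ε₂` have norm `-1`, multiplying this relation by
its conjugates restricts the parities of `a`, `b`, `c`: they all agree if `ε₃` has norm `-1`, and
`a`, `b` are even if `ε₃` has norm `1`. The two fundamental systems follow once `ε₁ * ε₂ * ε₃`,
respectively `ε₃`, is known to be a square.

Squares come from Hilbert 90. For a unit `e`, an element `k` with `σ k ^ 2 / k ^ 2 = σ e / e` and
`τ k ^ 2 / k ^ 2 = τ e / e` satisfies `k ^ 2 = n * e` for some integer `n`, which is a square up to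
ramified primes. These are `2` and `p`, which are squares in `F`, so `e` is a square. If `ε₃` has
norm `1`, then `k = 1 + ε₃` serves for `e = ε₃`. If it has norm `-1`, then
`k = ε₁ * ε₂ * ε₃ + ε₁ + ε₂ - ε₃` serves for `e = ε₁ * ε₂ * ε₃`. The same argument in `ℚ(√p)` and
in `ℚ(√2)`, each with a single ramified prime, shows that `ε₁` and `ε₂` have norm `-1`: otherwise
they would be squares there.
-/

/-! ### Primes unramified in subfields -/

section Radical

variable {R : Type*} [CommRing R]

/-- The element `q` is radical in the subring of `R` fixed by `g`. For `q` a prime number and a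
ring of integers `R`, this says that `q` is unramified in the field fixed by `g`. -/
def IsRadicalOn (g : R →+* R) (q : R) : Prop :=
  ∀ x, g x = x → q ∣ x ^ 2 → q ∣ x

theorem dvd_add_sq_of_dvd_sq [IsDomain R] [IsIntegrallyClosed R] {q x y : R}
    (hx : q ∣ x ^ 2) (hy : q ∣ y ^ 2) : q ∣ (x + y) ^ 2 := by
  have hxy : q ∣ x * y := by
    rw [← IsIntegrallyClosed.pow_dvd_pow_iff two_ne_zero, mul_pow, sq q]
    exact mul_dvd_mul hx hy
  rw [add_sq, mul_assoc]
  exact ((hx.add (hxy.mul_left 2)).add hy)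

theorem dvd_map_sq {q : ℤ} {x : R} (h : R →+* R) (hx : (q : R) ∣ x ^ 2) :
    (q : R) ∣ h x ^ 2 := by
  simpa only [map_pow, map_intCast] using map_dvd h hx

-- `q` divides the traces of `x` and `x * θ`, hence `x * (θ - h θ)`.
theorem IsRadicalOn.of_involutive [IsDomain R] [IsIntegrallyClosed R] {g h : R →+* R} {q : ℤ}
    (hgh : ∀ x, g (h x) = h (g x)) (hh : Function.Involutive h)
    (hq : ∀ x, g x = x → h x = x → (q : R) ∣ x ^ 2 → (q : R) ∣ x)
    {θ : R} (hθ : g θ = θ) (hcop : IsCoprime (q : R) (θ - h θ)) : IsRadicalOn g (q : R) := by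
  have dvd_trace {x : R} (hx : g x = x) (hdvd : (q : R) ∣ x ^ 2) : (q : R) ∣ x + h x := by
    refine hq _ (by rw [map_add, hgh, hx]) (by rw [map_add, hh, add_comm]) ?_
    exact dvd_add_sq_of_dvd_sq hdvd (dvd_map_sq h hdvd)
  intro x hx hdvd
  have h₁ : (q : R) ∣ x + h x := dvd_trace hx hdvd
  have h₂ : (q : R) ∣ x * θ + h (x * θ) :=
    dvd_trace (by rw [map_mul, hx, hθ]) (mul_pow x θ 2 ▸ hdvd.mul_right _)
  refine hcop.dvd_of_dvd_mul_right ?_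
  convert h₂.sub (h₁.mul_right (h θ)) using 1
  rw [map_mul]
  ring

theorem isCoprime_of_sq_eq_pow {q ℓ m : ℕ} (hq : q.Prime) (hℓ : ℓ.Prime) (hne : q ≠ ℓ) {x : R}
    (hx : x ^ 2 = (ℓ : R) ^ m) : IsCoprime (q : R) x := by
  rw [← IsCoprime.pow_right_iff two_pos, hx]
  have : IsCoprime (q : ℤ) (ℓ : ℤ) := Nat.isCoprime_iff_coprime.2 ((Nat.coprime_primes hq hℓ).2 hne)
  simpa using (this.map (Int.castRingHom R)).pow_right (n := m)

theorem dvd_of_squarefree_of_forall_prime_dvd {s n : ℕ} (hs : Squarefree s)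
    (h : ∀ q, q.Prime → q ∣ s → q ∣ n) : s ∣ n := by
  rw [← Nat.prod_primeFactors_of_squarefree hs]
  exact Finset.prod_primes_dvd n (fun q hq => (Nat.prime_of_mem_primeFactors hq).prime)
    fun q hq => h q (Nat.prime_of_mem_primeFactors hq) (Nat.dvd_of_mem_primeFactors hq)

theorem exists_squarefree_sq_eq [IsDomain R] [CharZero R] [IsIntegrallyClosed R] {n : ℕ}
    (hn : n ≠ 0) {k x : R} (hk : k ^ 2 = n * x) :
    ∃ (s f : ℕ) (w : R), Squarefree s ∧ f ≠ 0 ∧ k = f * w ∧ w ^ 2 = s * x := by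
  obtain ⟨s, f, rfl, hs⟩ := Nat.sq_mul_squarefree n
  have hf : f ≠ 0 := by
    rintro rfl
    simp at hn
  push_cast at hk
  obtain ⟨w, rfl⟩ : (f : R) ∣ k := by
    rw [← IsIntegrallyClosed.pow_dvd_pow_iff two_ne_zero, hk, mul_assoc]
    exact dvd_mul_right _ _
  refine ⟨s, f, w, hs, hf, rfl, ?_⟩
  refine mul_left_cancel₀ (pow_ne_zero 2 (Nat.cast_ne_zero.2 hf : (f : R) ≠ 0)) ?_
  linear_combination hk

end Radical

/-- Two commuting involutions `σ`, `τ` of a ring whose common fixed points are the integers: the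
ring of integers of a biquadratic field with Galois group `{1, σ, τ, στ}`. -/
structure IsBiquadratic {R : Type*} [CommRing R] (σ τ : R →+* R) : Prop where
  involutive_left : Function.Involutive σ
  involutive_right : Function.Involutive τ
  commute : ∀ x, σ (τ x) = τ (σ x)
  exists_intCast : ∀ x, σ x = x → τ x = x → ∃ m : ℤ, x = m

namespace IsBiquadratic

variable {R : Type*} [CommRing R] {σ τ : R →+* R}

theorem symm (h : IsBiquadratic σ τ) : IsBiquadratic τ σ where
  involutive_left := h.involutive_right
  involutive_right := h.involutive_left
  commute x := (h.commute x).symm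
  exists_intCast x hτ hσ := h.exists_intCast x hσ hτ

theorem exists_sq_eq_natCast_mul (h : IsBiquadratic σ τ) {φ : R →+* ℝ} {e : Rˣ} (he : 0 < φ e)
    {k : R} (hk : 0 < φ k) (hσ : σ k ^ 2 * e = k ^ 2 * σ e) (hτ : τ k ^ 2 * e = k ^ 2 * τ e) :
    ∃ n : ℕ, n ≠ 0 ∧ k ^ 2 = n * e := by
  have fixed {g : R →+* R} (hg : g k ^ 2 * e = k ^ 2 * g e) :
      g (k ^ 2 * ↑e⁻¹) = k ^ 2 * ↑e⁻¹ := by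
    have hinv : g e * g ↑e⁻¹ = 1 := by rw [← map_mul, Units.mul_inv, map_one]
    rw [map_mul, map_pow, ← Units.mul_left_inj e, Units.inv_mul_cancel_right]
    linear_combination g ↑e⁻¹ * hg + k ^ 2 * hinv
  obtain ⟨m, hm⟩ := h.exists_intCast _ (fixed hσ) (fixed hτ)
  have hkm : k ^ 2 = m * e := by rw [← hm, Units.inv_mul_cancel_right]
  have hφ : φ k ^ 2 = m * φ e := by simpa only [map_pow, map_mul, map_intCast] using congrArg φ hkm
  have hpos : 0 < m := by
    rw [← Int.cast_pos (R := ℝ)]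
    exact pos_of_mul_pos_left (hφ ▸ pow_pos hk 2) he.le
  lift m to ℕ using hpos.le
  exact ⟨m, by omega, mod_cast hkm⟩

variable [IsDomain R] [CharZero R]

theorem intCast_dvd_intCast (h : IsBiquadratic σ τ) {a b : ℤ} : (a : R) ∣ (b : R) ↔ a ∣ b := by
  refine ⟨fun ⟨x, hx⟩ => ?_, map_dvd (Int.castRingHom R)⟩
  rcases eq_or_ne a 0 with rfl | ha
  · simp_all
  have fixed (g : R →+* R) : g x = x := by
    have := congrArg g hx
    rw [map_mul, map_intCast, map_intCast, hx] at this
    exact (mul_left_cancel₀ (Int.cast_ne_zero.2 ha) this).symm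
  obtain ⟨m, rfl⟩ := h.exists_intCast x (fixed σ) (fixed τ)
  exact ⟨m, mod_cast hx⟩

theorem dvd_of_dvd_sq (h : IsBiquadratic σ τ) {q : ℕ} (hq : q.Prime) {x : R} (hσ : σ x = x)
    (hτ : τ x = x) (hx : (q : R) ∣ x ^ 2) : (q : R) ∣ x := by
  obtain ⟨m, rfl⟩ := h.exists_intCast x hσ hτ
  have hm : (q : ℤ) ∣ m ^ 2 := h.intCast_dvd_intCast.1 (mod_cast hx)
  exact_mod_cast h.intCast_dvd_intCast.2 ((Nat.prime_iff_prime_int.1 hq).dvd_of_dvd_pow hm)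

theorem eq_one_or_eq_neg_one (h : IsBiquadratic σ τ) {u : Rˣ} (hσ : σ u = u) (hτ : τ u = u) :
    u = 1 ∨ u = -1 := by
  obtain ⟨m, hm⟩ := h.exists_intCast u hσ hτ
  have : m ∣ 1 := h.intCast_dvd_intCast.1 (by simp [← hm])
  rcases Int.isUnit_iff.1 (isUnit_of_dvd_one this) with rfl | rfl
  · exact .inl (Units.ext (by simpa using hm))
  · exact .inr (Units.ext (by simpa using hm))

theorem dvd_of_sq_eq_mul (h : IsBiquadratic σ τ) {g : R →+* R} {n s : ℕ}
    (hrad : ∀ q : ℕ, q.Prime → ¬ q ∣ n → IsRadicalOn g (q : R)) (hs : Squarefree s) {e : Rˣ} {w : R}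
    (hg : g w = w) (hw : w ^ 2 = s * e) : s ∣ n := by
  refine dvd_of_squarefree_of_forall_prime_dvd hs fun q hq hqs => ?_
  by_contra hqn
  have hqw : (q : R) ∣ w := hrad q hq hqn w hg (hw ▸ (map_dvd (Nat.castRingHom R) hqs).mul_right _)
  have hqs2 : (q : R) ^ 2 ∣ s := e.isUnit.dvd_mul_right.1 (hw ▸ pow_dvd_pow_of_dvd hqw 2)
  have hqq : q * q ∣ s := by
    have : (q : ℤ) ^ 2 ∣ s := h.intCast_dvd_intCast.1 (mod_cast hqs2)
    rw [← sq]
    exact_mod_cast this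
  exact hq.one_lt.ne' (Nat.isUnit_iff.1 (hs q hqq))

theorem exists_unit_sq_eq [IsIntegrallyClosed R] (h : IsBiquadratic σ τ) {φ : R →+* ℝ}
    {g : R →+* R} {n : ℕ} (hrad : ∀ q : ℕ, q.Prime → ¬ q ∣ n → IsRadicalOn g (q : R))
    (hsqrt : ∀ s, s ∣ n → ∃ v : R, g v = v ∧ v ^ 2 = s) {e : Rˣ} (he : 0 < φ e)
    {k : R} (hk : 0 < φ k) (hg : g k = k) (hσ : σ k ^ 2 * e = k ^ 2 * σ e)
    (hτ : τ k ^ 2 * e = k ^ 2 * τ e) : ∃ v : Rˣ, g v = v ∧ v ^ 2 = e := by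
  obtain ⟨N, hN, hkN⟩ := h.exists_sq_eq_natCast_mul he hk hσ hτ
  obtain ⟨s, f, w, hs, hf, rfl, hw⟩ := exists_squarefree_sq_eq hN hkN
  have hgw : g w = w := by
    rw [map_mul, map_natCast] at hg
    exact mul_left_cancel₀ (Nat.cast_ne_zero.2 hf) hg
  obtain ⟨v, hgv, hv⟩ := hsqrt s (h.dvd_of_sq_eq_mul hrad hs hgw hw)
  have hv0 : v ≠ 0 := by
    rintro rfl
    exact hs.ne_zero (by simpa using hv.symm)
  obtain ⟨u, rfl⟩ : v ∣ w := by
    rw [← IsIntegrallyClosed.pow_dvd_pow_iff two_ne_zero, hw, hv]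
    exact dvd_mul_right _ _
  have hu : u ^ 2 = e := mul_left_cancel₀ (pow_ne_zero 2 hv0) (by rw [← mul_pow, hw, hv])
  have hgu : g u = u := by
    rw [map_mul, hgv] at hgw
    exact mul_left_cancel₀ hv0 hgw
  obtain ⟨u, rfl⟩ : IsUnit u := (isUnit_pow_iff two_ne_zero).1 (hu ▸ e.isUnit)
  exact ⟨u, hgu, Units.ext hu⟩

end IsBiquadratic

/-! ### Fundamental units of the fixed subrings -/

/-- The unit `e` is the fundamental unit of the subring fixed by `g`, where being greater than `1`
refers to the real embedding `φ`. -/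
structure IsFundamentalOn {R : Type*} [CommRing R] (φ : R →+* ℝ) (g : R →+* R) (e : Rˣ) :
    Prop where
  one_lt : 1 < φ e
  map_eq : g e = e
  exists_zpow : ∀ u : Rˣ, g u = u → ∃ n : ℤ, u = e ^ n ∨ u = -e ^ n

section Fundamental

variable {R : Type*} [CommRing R] {φ : R →+* ℝ}

theorem map_units_zpow (φ : R →+* ℝ) (u : Rˣ) (n : ℤ) : φ ↑(u ^ n) = φ u ^ n := by
  have := congrArg Units.val (map_zpow (Units.map (φ : R →* ℝ)) u n)
  rwa [Units.val_zpow_eq_zpow_val] at this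

theorem eq_of_eq_or_eq_neg {x y : Rˣ} (hx : 0 < φ x) (hy : 0 < φ y) (h : x = y ∨ x = -y) :
    x = y := by
  refine h.resolve_right ?_
  rintro rfl
  simp only [Units.val_neg, map_neg] at hx
  linarith

theorem even_of_sq_eq_neg_one_zpow (φ : R →+* ℝ) {x : Rˣ} {n : ℤ} (h : x ^ 2 = (-1) ^ n) :
    Even n := by
  by_contra hn
  have hφ : φ x ^ 2 = -1 := by
    rw [(Int.not_even_iff_odd.1 hn).neg_one_zpow] at h
    simpa using congrArg (fun u : Rˣ => φ u) h
  nlinarith [sq_nonneg (φ x)]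

variable {g : R →+* R} {e : Rˣ}

theorem IsFundamentalOn.pos (he : IsFundamentalOn φ g e) : 0 < φ e := one_pos.trans he.one_lt

theorem IsFundamentalOn.sq_ne (he : IsFundamentalOn φ g e) {v : Rˣ} (hv : g v = v) :
    v ^ 2 ≠ e := by
  intro hve
  obtain ⟨n, hn⟩ := he.exists_zpow v hv
  have hsq : v ^ 2 = e ^ (n * 2) := by
    rw [zpow_mul, zpow_ofNat]
    rcases hn with rfl | rfl
    exacts [rfl, neg_sq _]
  have hφ : φ e ^ (n * 2) = φ e ^ (1 : ℤ) := by rw [← map_units_zpow, ← hsq, hve, zpow_one]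
  have := zpow_right_injective₀ he.pos he.one_lt.ne' hφ
  omega

end Fundamental

namespace IsBiquadratic

variable {R : Type*} [CommRing R] {σ τ : R →+* R} {φ : R →+* ℝ} {e₁ e₂ e₃ : Rˣ}

theorem sq_eq_zpow (h : IsBiquadratic σ τ) (h₁ : IsFundamentalOn φ σ e₁)
    (h₂ : IsFundamentalOn φ τ e₂) (h₃ : IsFundamentalOn φ (σ.comp τ) e₃) (t : Rˣ) :
    ∃ a b c : ℤ, t ^ 2 = e₁ ^ a * e₂ ^ b * e₃ ^ c := by
  set tσ : Rˣ := Units.map σ t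
  set tτ : Rˣ := Units.map τ t
  obtain ⟨a, ha⟩ := h₁.exists_zpow (t * tσ)
    (by simp [tσ, h.involutive_left (t : R), mul_comm])
  obtain ⟨b, hb⟩ := h₂.exists_zpow (t * tτ)
    (by simp [tτ, h.involutive_right (t : R), mul_comm])
  obtain ⟨c, hc⟩ := h₃.exists_zpow (tσ * tτ)
    (by simp [tσ, tτ, ← h.commute, h.involutive_right (t : R), h.involutive_left (τ t), mul_comm])
  refine ⟨a, b, -c, ?_⟩
  have ht : t ^ 2 = (t * tσ) * (t * tτ) * (tσ * tτ)⁻¹ := by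
    rw [eq_mul_inv_iff_mul_eq, sq, mul_mul_mul_comm]
  have hpos (e : Rˣ) (he : 0 < φ e) (n : ℤ) : 0 < φ ↑(e ^ n) := by
    rw [map_units_zpow]
    exact zpow_pos he n
  refine eq_of_eq_or_eq_neg (φ := φ) ?_ ?_ ?_
  · rw [Units.val_pow_eq_pow_val, map_pow]
    exact sq_pos_iff.2 (t.isUnit.map φ).ne_zero
  · simp only [Units.val_mul, map_mul]
    have := hpos _ h₁.pos a
    have := hpos _ h₂.pos b
    have := hpos _ h₃.pos (-c)
    positivity
  · rw [ht]
    rcases ha with ha | ha <;> rcases hb with hb | hb <;> rcases hc with hc | hc <;>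
      simp [ha, hb, hc, zpow_neg]

theorem mul_map_eq_one_or_neg_one [IsDomain R] [CharZero R] (h : IsBiquadratic σ τ) {u : Rˣ}
    (hu : σ u = u) : u * Units.map τ u = 1 ∨ u * Units.map τ u = -1 :=
  h.eq_one_or_eq_neg_one (by simp [h.commute, hu])
    (by simp [h.involutive_right (u : R), mul_comm])

variable [IsDomain R] [IsIntegrallyClosed R]

theorem isRadicalOn_left [CharZero R] (h : IsBiquadratic σ τ) {ℓ m q : ℕ} (hℓ : ℓ.Prime)
    (hq : q.Prime) (hne : q ≠ ℓ) {θ : R} (hσ : σ θ = θ) (hτ : (θ - τ θ) ^ 2 = (ℓ : R) ^ m) :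
    IsRadicalOn σ (q : R) := by
  have := IsRadicalOn.of_involutive (q := q) h.commute h.involutive_right
    (fun x hσ hτ hx => by exact_mod_cast h.dvd_of_dvd_sq hq hσ hτ (mod_cast hx)) hσ
    (mod_cast isCoprime_of_sq_eq_pow hq hℓ hne hτ)
  exact_mod_cast this

theorem isRadicalOn_id (h : IsBiquadratic σ τ) {ℓ m q : ℕ} (hℓ : ℓ.Prime) (hq : q.Prime)
    (hne : q ≠ ℓ) {θ : R} (hσ : (θ - σ θ) ^ 2 = (ℓ : R) ^ m) (hrad : IsRadicalOn σ (q : R)) :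
    IsRadicalOn (RingHom.id R) (q : R) := by
  have := IsRadicalOn.of_involutive (q := q) (g := RingHom.id R) (h := σ) (fun _ => rfl)
    h.involutive_left
    (fun x _ hx hdvd => by exact_mod_cast hrad x hx (mod_cast hdvd)) rfl
    (mod_cast isCoprime_of_sq_eq_pow hq hℓ hne hσ)
  exact_mod_cast this

end IsBiquadratic

section NormNegOne

variable {R : Type*} [CommRing R]

theorem map_one_add_sq_mul {g : R →+* R} {x : R} (hx : g x = x ∨ x * g x = 1) :
    g (1 + x) ^ 2 * x = (1 + x) ^ 2 * g x := by
  rw [map_add, map_one]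
  rcases hx with hx | hx
  · rw [hx]
  · linear_combination (g x - x) * hx

theorem exists_sq_eq_of_dvd_prime {g : R →+* R} {ℓ s : ℕ} (hℓ : ℓ.Prime) {ρ : R} (hg : g ρ = ρ)
    (hρ : ρ ^ 2 = ℓ) (hs : s ∣ ℓ) : ∃ v : R, g v = v ∧ v ^ 2 = s := by
  rcases (Nat.dvd_prime hℓ).1 hs with rfl | rfl
  exacts [⟨1, map_one g, by simp⟩, ⟨ρ, hg, hρ⟩]

theorem IsFundamentalOn.mul_map_eq_neg_one [IsDomain R] [CharZero R] [IsIntegrallyClosed R]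
    {σ τ : R →+* R} {φ : R →+* ℝ} {e : Rˣ} (he : IsFundamentalOn φ σ e) (h : IsBiquadratic σ τ)
    {ℓ : ℕ} (hℓ : ℓ.Prime) {ρ : R} (hσρ : σ ρ = ρ) (hρ : ρ ^ 2 = ℓ)
    (hrad : ∀ q : ℕ, q.Prime → q ≠ ℓ → IsRadicalOn σ (q : R)) : e * Units.map τ e = -1 := by
  refine (h.mul_map_eq_one_or_neg_one he.map_eq).resolve_left fun hnorm => ?_
  have hnorm : (e : R) * τ e = 1 := congrArg Units.val hnorm
  obtain ⟨v, hv, hve⟩ := h.exists_unit_sq_eq (k := 1 + e)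
    (fun q hq hqℓ => hrad q hq fun h => hqℓ h.dvd)
    (fun s hs => exists_sq_eq_of_dvd_prime hℓ hσρ hρ hs) he.pos
    (by rw [map_add, map_one]; linarith [he.pos]) (by rw [map_add, map_one, he.map_eq])
    (map_one_add_sq_mul (.inl he.map_eq)) (map_one_add_sq_mul (.inr hnorm))
  exact he.sq_ne hv hve

end NormNegOne

/-- The fundamental units `e₁`, `e₂`, `e₃` of the subrings fixed by `σ`, `τ` and `στ`, the first two
of them having norm `-1`. -/
structure IsUnitTriple {R : Type*} [CommRing R] (φ : R →+* ℝ) (σ τ : R →+* R)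
    (e₁ e₂ e₃ : Rˣ) : Prop extends IsBiquadratic σ τ where
  fund₁ : IsFundamentalOn φ σ e₁
  fund₂ : IsFundamentalOn φ τ e₂
  fund₃ : IsFundamentalOn φ (σ.comp τ) e₃
  norm₁ : e₁ * Units.map τ e₁ = -1
  norm₂ : e₂ * Units.map σ e₂ = -1

namespace IsUnitTriple

variable {R : Type*} [CommRing R] {φ : R →+* ℝ} {σ τ : R →+* R} {e₁ e₂ e₃ : Rˣ}

theorem symm (h : IsUnitTriple φ σ τ e₁ e₂ e₃) : IsUnitTriple φ τ σ e₂ e₁ e₃ where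
  __ := h.toIsBiquadratic.symm
  fund₁ := h.fund₂
  fund₂ := h.fund₁
  fund₃ := by
    convert h.fund₃ using 1
    ext x
    exact (h.commute x).symm
  norm₁ := h.norm₂
  norm₂ := h.norm₁

theorem map_eq_map₃ (h : IsUnitTriple φ σ τ e₁ e₂ e₃) :
    Units.map (τ : R →* R) e₃ = Units.map σ e₃ := by
  refine Units.ext ?_
  simpa [h.involutive_left (τ (e₃ : R))] using congrArg σ h.fund₃.map_eq

theorem norm₃_eq_one_or_neg_one [IsDomain R] [CharZero R] (h : IsUnitTriple φ σ τ e₁ e₂ e₃) :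
    e₃ * Units.map σ e₃ = 1 ∨ e₃ * Units.map σ e₃ = -1 := by
  have hτσ : τ e₃ = σ e₃ := congrArg Units.val h.map_eq_map₃
  refine h.eq_one_or_eq_neg_one ?_ ?_
  · simp [h.involutive_left (e₃ : R), mul_comm]
  · simp [← hτσ, h.involutive_right (e₃ : R), mul_comm]

theorem exists_sq_eq_norm_zpow (h : IsUnitTriple φ σ τ e₁ e₂ e₃) {t : Rˣ} {a b c : ℤ}
    (ht : t ^ 2 = e₁ ^ a * e₂ ^ b * e₃ ^ c) :
    ∃ x : Rˣ, x ^ 2 = (-1) ^ b * (e₃ * Units.map σ e₃) ^ c := by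
  have h₁ : Units.map σ e₁ = e₁ := Units.ext h.fund₁.map_eq
  refine ⟨t * Units.map σ t / e₁ ^ a, ?_⟩
  rw [div_pow, div_eq_iff_eq_mul, mul_pow, ← map_pow, ht]
  simp only [map_mul, map_zpow, h₁, ← h.norm₂, mul_zpow, sq]
  simp only [mul_comm, mul_left_comm, mul_assoc]

section NormNegOne

variable (h : IsUnitTriple φ σ τ e₁ e₂ e₃) (h₃ : e₃ * Units.map σ e₃ = -1)
include h h₃

theorem even_add_right {t : Rˣ} {a b c : ℤ} (ht : t ^ 2 = e₁ ^ a * e₂ ^ b * e₃ ^ c) :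
    Even (b + c) := by
  obtain ⟨x, hx⟩ := h.exists_sq_eq_norm_zpow ht
  rw [h₃, ← zpow_add] at hx
  exact even_of_sq_eq_neg_one_zpow φ hx

theorem even_add_left {t : Rˣ} {a b c : ℤ} (ht : t ^ 2 = e₁ ^ a * e₂ ^ b * e₃ ^ c) :
    Even (a + c) :=
  h.symm.even_add_right (h.map_eq_map₃ ▸ h₃) (by rw [ht, mul_comm (e₂ ^ b)])

theorem exists_zpow_of_sq_eq_mul [IsDomain R] {u : Rˣ} (hu : u ^ 2 = e₁ * e₂ * e₃) (t : Rˣ) :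
    ∃ a b c : ℤ, t = u ^ a * e₂ ^ b * e₃ ^ c ∨ t = -(u ^ a * e₂ ^ b * e₃ ^ c) := by
  obtain ⟨a, b, c, ht⟩ := h.sq_eq_zpow h.fund₁ h.fund₂ h.fund₃ t
  obtain ⟨b', hb⟩ : Even (b - a) := by grind [h.even_add_left h₃ ht, h.even_add_right h₃ ht]
  obtain ⟨c', hc⟩ : Even (c - a) := by grind [h.even_add_left h₃ ht]
  refine ⟨a, b', c', Units.sq_eq_sq_iff_eq_or_eq_neg.1 ?_⟩
  rw [ht, mul_pow, mul_pow, ← zpow_natCast, ← zpow_mul, mul_comm a, zpow_mul, zpow_natCast, hu,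
    mul_zpow, mul_zpow]
  obtain rfl : b = a + 2 * b' := by omega
  obtain rfl : c = a + 2 * c' := by omega
  simp only [zpow_add, two_mul, sq]
  simp only [mul_comm, mul_left_comm, mul_assoc]

end NormNegOne

section NormOne

variable (h : IsUnitTriple φ σ τ e₁ e₂ e₃) (h₃ : e₃ * Units.map σ e₃ = 1)
include h h₃

theorem even_right {t : Rˣ} {a b c : ℤ} (ht : t ^ 2 = e₁ ^ a * e₂ ^ b * e₃ ^ c) : Even b := by
  obtain ⟨x, hx⟩ := h.exists_sq_eq_norm_zpow ht
  rw [h₃, one_zpow, mul_one] at hx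
  exact even_of_sq_eq_neg_one_zpow φ hx

theorem even_left {t : Rˣ} {a b c : ℤ} (ht : t ^ 2 = e₁ ^ a * e₂ ^ b * e₃ ^ c) : Even a :=
  h.symm.even_right (h.map_eq_map₃ ▸ h₃) (by rw [ht, mul_comm (e₂ ^ b)])

theorem exists_zpow_of_sq_eq [IsDomain R] {u : Rˣ} (hu : u ^ 2 = e₃) (t : Rˣ) :
    ∃ a b c : ℤ, t = e₁ ^ a * e₂ ^ b * u ^ c ∨ t = -(e₁ ^ a * e₂ ^ b * u ^ c) := by
  obtain ⟨a, b, c, ht⟩ := h.sq_eq_zpow h.fund₁ h.fund₂ h.fund₃ t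
  obtain ⟨a, rfl⟩ := h.even_left h₃ ht
  obtain ⟨b, rfl⟩ := h.even_right h₃ ht
  refine ⟨a, b, c, Units.sq_eq_sq_iff_eq_or_eq_neg.1 ?_⟩
  rw [ht, ← hu]
  simp only [zpow_add, sq, mul_zpow]
  simp only [mul_comm, mul_left_comm, mul_assoc]

end NormOne

end IsUnitTriple

/-- The elements `α = √2`, `β = √p` and `θ = (1 + √p) / 2` of the ring of integers of `ℚ(√p, √2)`,
with `σ` fixing `√p` and `τ` fixing `√2`. -/
structure IsSqrtTwoPrime {R : Type*} [CommRing R] (σ τ : R →+* R) (p : ℕ) (α β θ : R) : Prop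
    extends IsBiquadratic σ τ where
  sq_α : α ^ 2 = 2
  sq_β : β ^ 2 = p
  two_mul_θ : 2 * θ = 1 + β
  left_α : σ α = -α
  left_β : σ β = β
  right_α : τ α = α
  right_β : τ β = -β

namespace IsSqrtTwoPrime

variable {R : Type*} [CommRing R] {σ τ : R →+* R} {p : ℕ} {α β θ : R}

theorem sub_left_α_sq (h : IsSqrtTwoPrime σ τ p α β θ) : (α - σ α) ^ 2 = ((2 : ℕ) : R) ^ 3 := by
  rw [h.left_α]
  push_cast
  linear_combination 4 * h.sq_α

variable [IsDomain R] [CharZero R] [IsIntegrallyClosed R] (h : IsSqrtTwoPrime σ τ p α β θ)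
  (hp : p.Prime)
include h

theorem isRadicalOn_right {q : ℕ} (hq : q.Prime) (hq2 : q ≠ 2) : IsRadicalOn τ (q : R) :=
  h.symm.isRadicalOn_left Nat.prime_two hq hq2 h.right_α h.sub_left_α_sq

include hp

theorem isRadicalOn_left {q : ℕ} (hq : q.Prime) (hqp : q ≠ p) : IsRadicalOn σ (q : R) := by
  have two_ne : (2 : R) ≠ 0 := two_ne_zero
  have hσ : σ θ = θ := mul_left_cancel₀ two_ne <| by
    rw [h.two_mul_θ, ← map_ofNat σ 2, ← map_mul, h.two_mul_θ, map_add, map_one, h.left_β]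
  have hτ : θ - τ θ = β := mul_left_cancel₀ two_ne <| by
    have : 2 * τ θ = 1 + -β := by
      simpa only [map_mul, map_add, map_ofNat, map_one, h.right_β] using congrArg τ h.two_mul_θ
    linear_combination h.two_mul_θ - this
  exact h.toIsBiquadratic.isRadicalOn_left (m := 1) hp hq hqp hσ (by rw [hτ, h.sq_β, pow_one])

theorem isRadicalOn_id {q : ℕ} (hq : q.Prime) (hqp : ¬ q ∣ 2 * p) :
    IsRadicalOn (RingHom.id R) (q : R) := by
  refine h.toIsBiquadratic.isRadicalOn_id Nat.prime_two hq ?_ h.sub_left_α_sq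
    (h.isRadicalOn_left hp hq ?_)
  · exact fun h2 => hqp (h2 ▸ dvd_mul_right q p)
  · exact fun hqp' => hqp (hqp' ▸ dvd_mul_left q 2)

theorem isUnitTriple {φ : R →+* ℝ} {e₁ e₂ e₃ : Rˣ} (h₁ : IsFundamentalOn φ σ e₁)
    (h₂ : IsFundamentalOn φ τ e₂) (h₃ : IsFundamentalOn φ (σ.comp τ) e₃) :
    IsUnitTriple φ σ τ e₁ e₂ e₃ where
  __ := h.toIsBiquadratic
  fund₁ := h₁
  fund₂ := h₂
  fund₃ := h₃
  norm₁ := h₁.mul_map_eq_neg_one h.toIsBiquadratic hp h.left_β h.sq_β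
    fun _ => h.isRadicalOn_left hp
  norm₂ := h₂.mul_map_eq_neg_one h.symm Nat.prime_two h.right_α (mod_cast h.sq_α)
    fun _ => h.isRadicalOn_right

theorem exists_unit_sq_eq {φ : R →+* ℝ} {e : Rˣ} (he : 0 < φ e) {k : R} (hk : 0 < φ k)
    (hσ : σ k ^ 2 * e = k ^ 2 * σ e) (hτ : τ k ^ 2 * e = k ^ 2 * τ e) : ∃ v : Rˣ, v ^ 2 = e := by
  have hsqrt (s : ℕ) (hs : s ∣ 2 * p) : ∃ v : R, RingHom.id R v = v ∧ v ^ 2 = s := by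
    obtain ⟨a, b, ha, hb, rfl⟩ := Nat.dvd_mul.1 hs
    obtain ⟨v, -, hv⟩ := exists_sq_eq_of_dvd_prime (g := RingHom.id R) Nat.prime_two rfl
      (mod_cast h.sq_α) ha
    obtain ⟨w, -, hw⟩ := exists_sq_eq_of_dvd_prime (g := RingHom.id R) hp rfl h.sq_β hb
    exact ⟨v * w, rfl, by rw [mul_pow, hv, hw, Nat.cast_mul]⟩
  obtain ⟨v, -, hv⟩ := h.toIsBiquadratic.exists_unit_sq_eq (fun q => h.isRadicalOn_id hp) hsqrt
    he hk rfl hσ hτ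
  exact ⟨v, hv⟩

end IsSqrtTwoPrime

namespace IsUnitTriple

variable {R : Type*} [CommRing R] {φ : R →+* ℝ} {σ τ : R →+* R} {e₁ e₂ e₃ : Rˣ}

-- If `u ^ 2 = e₁ * e₂ * e₃`, then `k` is, up to the signs of the conjugates of `u`, the product of
-- `u` and its trace.
theorem map_add_sub_sq_mul (h : IsUnitTriple φ σ τ e₁ e₂ e₃)
    (h₃ : e₃ * Units.map σ e₃ = -1) {k : R}
    (hk : k = e₁ * e₂ * e₃ + e₁ + e₂ - e₃) :
    σ k ^ 2 * (e₁ * e₂ * e₃) = k ^ 2 * σ (e₁ * e₂ * e₃) := by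
  have hσ₁ : σ e₁ = e₁ := h.fund₁.map_eq
  have hσ₂ : (e₂ : R) * σ e₂ = -1 := congrArg Units.val h.norm₂
  have hσ₃ : (e₃ : R) * σ e₃ = -1 := congrArg Units.val h₃
  have hk' : e₂ * e₃ * σ k = k := by
    simp only [hk, map_sub, map_add, map_mul, hσ₁]
    linear_combination (e₁ * σ e₃ * e₃ + e₃) * hσ₂ - (e₁ + e₂) * hσ₃
  rw [map_mul, map_mul, hσ₁]
  linear_combination e₁ * σ e₂ * σ e₃ * (e₂ * e₃ * σ k + k) * hk'
    - σ k ^ 2 * e₁ * e₂ * e₃ * (e₃ * σ e₃ * hσ₂ - hσ₃)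

section Roots

variable [IsDomain R] [CharZero R] [IsIntegrallyClosed R] {p : ℕ} {α β θ : R}
  (h : IsUnitTriple φ σ τ e₁ e₂ e₃) (hs : IsSqrtTwoPrime σ τ p α β θ) (hp : p.Prime)
include h hs hp

theorem exists_sq_eq (h₃ : e₃ * Units.map σ e₃ = 1) : ∃ u : Rˣ, u ^ 2 = e₃ := by
  have hσ : (e₃ : R) * σ e₃ = 1 := congrArg Units.val h₃
  have hτ : (e₃ : R) * τ e₃ = 1 := congrArg Units.val (h.map_eq_map₃ ▸ h₃)
  refine hs.exists_unit_sq_eq hp (k := 1 + e₃) h.fund₃.pos ?_ (map_one_add_sq_mul (.inr hσ))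
    (map_one_add_sq_mul (.inr hτ))
  rw [map_add, map_one]
  linarith [h.fund₃.pos]

theorem exists_sq_eq_mul (h₃ : e₃ * Units.map σ e₃ = -1) : ∃ u : Rˣ, u ^ 2 = e₁ * e₂ * e₃ := by
  have hσ := h.map_add_sub_sq_mul h₃ rfl
  have hτ := h.symm.map_add_sub_sq_mul (h.map_eq_map₃ ▸ h₃) (k := e₁ * e₂ * e₃ + e₁ + e₂ - e₃)
    (by ring)
  rw [mul_comm (e₂ : R)] at hτ
  have one_lt₁ := h.fund₁.one_lt
  have one_lt₂ := h.fund₂.one_lt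
  have pos₃ := h.fund₃.pos
  refine hs.exists_unit_sq_eq (φ := φ) hp ?_ ?_ (mod_cast hσ) (mod_cast hτ)
  · simp only [Units.val_mul, map_mul]
    positivity
  · simp only [map_sub, map_add, map_mul]
    nlinarith [mul_lt_mul'' one_lt₁ one_lt₂ zero_le_one zero_le_one]

theorem exists_sq_eq_mul_iff :
    (∃ u : Rˣ, u ^ 2 = e₁ * e₂ * e₃ ∧
      ∀ t, ∃ a b c : ℤ, t = u ^ a * e₂ ^ b * e₃ ^ c ∨ t = -(u ^ a * e₂ ^ b * e₃ ^ c)) ↔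
    e₃ * Units.map σ e₃ = -1 := by
  constructor
  · rintro ⟨u, hu, -⟩
    refine h.norm₃_eq_one_or_neg_one.resolve_left fun h₃ => ?_
    exact absurd (h.even_left (a := 1) (b := 1) (c := 1) h₃ (by simpa using hu)) (by decide)
  · intro h₃
    obtain ⟨u, hu⟩ := h.exists_sq_eq_mul hs hp h₃
    exact ⟨u, hu, h.exists_zpow_of_sq_eq_mul h₃ hu⟩

theorem exists_sq_eq_iff :
    (∃ u : Rˣ, u ^ 2 = e₃ ∧
      ∀ t, ∃ a b c : ℤ, t = e₁ ^ a * e₂ ^ b * u ^ c ∨ t = -(e₁ ^ a * e₂ ^ b * u ^ c)) ↔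
    e₃ * Units.map σ e₃ = 1 := by
  constructor
  · rintro ⟨u, hu, -⟩
    refine h.norm₃_eq_one_or_neg_one.resolve_right fun h₃ => ?_
    exact absurd (h.even_add_left (a := 0) (b := 0) (c := 1) h₃ (by simpa using hu)) (by decide)
  · intro h₃
    obtain ⟨u, hu⟩ := h.exists_sq_eq hs hp h₃
    exact ⟨u, hu, h.exists_zpow_of_sq_eq h₃ hu⟩

end Roots

end IsUnitTriple

/-! ### Quadratic extensions -/

section Quadratic

variable {k E : Type*} [Field k] [Field E] [Algebra k E] {a b : k} {r s : E}

theorem mem_adjoin_simple_iff_of_sq_eq (hs : s ^ 2 = algebraMap k E a) {x : E} :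
    x ∈ k⟮s⟯ ↔ ∃ u v : k, x = algebraMap k E u + algebraMap k E v * s := by
  constructor
  · intro hx
    have hint : IsAlgebraic k s := .of_pow two_pos (hs ▸ isAlgebraic_algebraMap a)
    rw [← mem_toSubalgebra, adjoin_simple_toSubalgebra_of_isAlgebraic hint] at hx
    induction hx using Algebra.adjoin_induction with
    | mem x hx => exact ⟨0, 1, by simpa using hx⟩
    | algebraMap c => exact ⟨c, 0, by simp⟩
    | add x y _ _ hx hy =>
      obtain ⟨u, v, rfl⟩ := hx
      obtain ⟨u', v', rfl⟩ := hy
      exact ⟨u + u', v + v', by simp only [map_add]; ring⟩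
    | mul x y _ _ hx hy =>
      obtain ⟨u, v, rfl⟩ := hx
      obtain ⟨u', v', rfl⟩ := hy
      refine ⟨u * u' + v * v' * a, u * v' + v * u', ?_⟩
      simp only [map_add, map_mul, ← hs]
      ring
  · rintro ⟨u, v, rfl⟩
    exact add_mem (IntermediateField.algebraMap_mem _ u)
      (mul_mem (IntermediateField.algebraMap_mem _ v) (mem_adjoin_simple_self k s))

theorem exists_eq_of_mem_adjoin_pair (hs : s ^ 2 = algebraMap k E a)
    (hr : r ^ 2 = algebraMap k E b) {x : E} (hx : x ∈ k⟮s, r⟯) :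
    ∃ u v w z : k, x = algebraMap k E u + algebraMap k E v * s + algebraMap k E w * r
      + algebraMap k E z * (s * r) := by
  rw [← adjoin_simple_adjoin_simple, mem_restrictScalars, mem_adjoin_simple_iff_of_sq_eq
    (a := algebraMap k k⟮s⟯ b) hr] at hx
  obtain ⟨⟨_, hx₀⟩, ⟨_, hx₁⟩, rfl⟩ := hx
  obtain ⟨u, v, rfl⟩ := (mem_adjoin_simple_iff_of_sq_eq hs).1 hx₀
  obtain ⟨w, z, rfl⟩ := (mem_adjoin_simple_iff_of_sq_eq hs).1 hx₁
  refine ⟨u, v, w, z, ?_⟩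
  simp only [IntermediateField.algebraMap_apply]
  ring

theorem isSquare_of_mem_bot (hs : s ^ 2 = algebraMap k E a)
    (h : s ∈ (⊥ : IntermediateField k E)) : IsSquare a := by
  obtain ⟨c, rfl⟩ := mem_bot.1 h
  exact ⟨c, (algebraMap k E).injective (by rw [← hs, map_mul, sq])⟩

theorem notMem_adjoin_simple_of_sq_eq [NeZero (2 : k)] (hs : s ^ 2 = algebraMap k E a)
    (hr : r ^ 2 = algebraMap k E b) (hb : ¬ IsSquare b) (hab : ¬ IsSquare (a * b)) : r ∉ k⟮s⟯ := by
  intro h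
  obtain ⟨u, v, rfl⟩ := (mem_adjoin_simple_iff_of_sq_eq hs).1 h
  rcases eq_or_ne u 0 with rfl | hu
  · refine hab ⟨v * a, (algebraMap k E).injective ?_⟩
    simp only [map_mul, ← hr, ← hs, map_zero]
    ring
  rcases eq_or_ne v 0 with rfl | hv
  · exact hb (isSquare_of_mem_bot hr (by simp))
  · have huv : 2 * u * v ≠ 0 := mul_ne_zero (mul_ne_zero two_ne_zero hu) hv
    have hs_eq : s = algebraMap k E ((b - u ^ 2 - v ^ 2 * a) / (2 * u * v)) := by
      rw [map_div₀, eq_div_iff ((map_ne_zero _).2 huv)]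
      simp only [map_sub, map_mul, map_pow, map_ofNat, ← hr, ← hs]
      ring
    refine hb (isSquare_of_mem_bot hr ?_)
    rw [hs_eq, ← map_mul, ← map_add]
    exact IntermediateField.algebraMap_mem _ _

theorem exists_algEquiv_map_eq_neg [IsGalois k E]
    {K : IntermediateField k E} (hs : s ^ 2 = algebraMap k E a) (hK : s ∉ K) :
    ∃ σ : Gal(E/k), (∀ x ∈ K, σ x = x) ∧ σ s = -s := by
  rw [← InfiniteGalois.fixedField_fixingSubgroup K, mem_fixedField_iff] at hK
  push Not at hK
  obtain ⟨σ, hσ, hne⟩ := hK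
  have hsq : σ s ^ 2 = s ^ 2 := by rw [← map_pow, hs, AlgEquiv.commutes]
  exact ⟨σ, (mem_fixingSubgroup_iff K σ).1 hσ, (sq_eq_sq_iff_eq_or_eq_neg.1 hsq).resolve_left hne⟩

theorem isQuadraticExtension_adjoin_simple (hs : s ^ 2 = algebraMap k E a) (ha : ¬ IsSquare a) :
    Algebra.IsQuadraticExtension k k⟮s⟯ := by
  have hirr : Irreducible (Polynomial.X ^ 2 - Polynomial.C a) :=
    X_pow_sub_C_irreducible_of_prime Nat.prime_two fun c hc => ha ⟨c, by rw [← hc, sq]⟩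
  have hmin := minpoly.eq_of_irreducible_of_monic hirr (x := s) (by simp [hs])
    (Polynomial.monic_X_pow_sub_C a two_ne_zero)
  refine ⟨?_⟩
  rw [adjoin.finrank (.of_pow two_pos (hs ▸ isIntegral_algebraMap)), ← hmin,
    Polynomial.natDegree_X_pow_sub_C]

theorem isGalois_adjoin_pair [CharZero k] (hs : s ^ 2 = algebraMap k E a)
    (hr : r ^ 2 = algebraMap k E b) (ha : ¬ IsSquare a) (hb : ¬ IsSquare b) :
    IsGalois k k⟮s, r⟯ := by
  have := isQuadraticExtension_adjoin_simple hs ha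
  have := isQuadraticExtension_adjoin_simple hr hb
  have hsup : k⟮s⟯ ⊔ k⟮r⟯ = k⟮s, r⟯ := by rw [← adjoin_union, Set.singleton_union]
  have : Normal k k⟮s, r⟯ := hsup ▸ normal_sup k E k⟮s⟯ k⟮r⟯
  exact ⟨⟩

theorem norm_eq_mul_of_isQuadraticExtension [Algebra.IsQuadraticExtension k E] [IsGalois k E]
    {σ : Gal(E/k)} (hσ : σ ≠ 1) (x : E) : algebraMap k E (Algebra.norm k x) = x * σ x := by
  classical
  have hcard : Nat.card Gal(E/k) = 2 := by
    rw [IsGalois.card_aut_eq_finrank, Algebra.IsQuadraticExtension.finrank_eq_two]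
  have huniv : (Finset.univ : Finset Gal(E/k)) = {1, σ} :=
    (Finset.eq_univ_of_card _
      (by rw [Finset.card_pair hσ.symm, ← Nat.card_eq_fintype_card, hcard])).symm
  rw [Algebra.norm_eq_prod_automorphisms, huniv, Finset.prod_pair hσ.symm, AlgEquiv.one_apply]

theorem norm_adjoin_simple_of_sq_eq [CharZero k] (hs : s ^ 2 = algebraMap k E a) (ha : ¬ IsSquare a)
    {u v : k} {z : k⟮s⟯} (hz : (z : E) = algebraMap k E u + algebraMap k E v * s) :
    Algebra.norm k z = u ^ 2 - a * v ^ 2 := by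
  have := isQuadraticExtension_adjoin_simple hs ha
  set r : k⟮s⟯ := AdjoinSimple.gen k s
  have hr : r ^ 2 = algebraMap k k⟮s⟯ a := Subtype.ext hs
  obtain ⟨σ, -, hσ⟩ := exists_algEquiv_map_eq_neg (K := ⊥) hr
    fun h => ha (isSquare_of_mem_bot hr h)
  have hr0 : r ≠ 0 := by
    intro h
    refine ha ⟨0, ?_⟩
    simpa [h] using hr.symm
  have hσ1 : σ ≠ 1 := by
    rintro rfl
    exact hr0 (self_eq_neg.1 hσ)
  obtain rfl : z = algebraMap k _ u + algebraMap k _ v * r := Subtype.ext hz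
  refine (algebraMap k k⟮s⟯).injective ?_
  rw [norm_eq_mul_of_isQuadraticExtension hσ1]
  simp only [map_add, map_mul, map_sub, map_pow, AlgEquiv.commutes, hσ, ← hr]
  ring

end Quadratic

/-! ### The field `ℚ(√p, √2)` -/

section QuadraticField

theorem sqrt_sq_eq_algebraMap (n : ℕ) : (Real.sqrt n : ℂ) ^ 2 = algebraMap ℚ ℂ n := by
  rw [← ofReal_pow, Real.sq_sqrt n.cast_nonneg, ofReal_natCast, map_natCast]

theorem sqrt_two_sq_eq_algebraMap : (Real.sqrt 2 : ℂ) ^ 2 = algebraMap ℚ ℂ 2 := by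
  simpa only [Nat.cast_ofNat] using sqrt_sq_eq_algebraMap 2

theorem mem_Qsqrt_iff {n : ℕ} {x : ℂ} : x ∈ Qsqrt n ↔ ∃ u v : ℚ, x = u + v * Real.sqrt n :=
  mem_adjoin_simple_iff_of_sq_eq (sqrt_sq_eq_algebraMap n)

theorem norm_Qsqrt {n : ℕ} (hn : ¬ IsSquare n) {u v : ℚ} {z : Qsqrt n}
    (hz : (z : ℂ) = u + v * Real.sqrt n) : Algebra.norm ℚ z = u ^ 2 - n * v ^ 2 :=
  norm_adjoin_simple_of_sq_eq (sqrt_sq_eq_algebraMap n) (Rat.isSquare_natCast_iff.not.2 hn) hz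

theorem not_isSquare_two_mul {n : ℕ} (hn : Odd n) : ¬ IsSquare (2 * n) := by
  rintro ⟨r, hr⟩
  obtain ⟨m, rfl⟩ : 2 ∣ r := by
    have : 2 ∣ r * r := ⟨n, hr.symm⟩
    simpa [Nat.prime_two.dvd_mul] using this
  grind

end QuadraticField

namespace Fbiq

/-- The element `√2` of `ℚ(√p, √2)`. -/
def sqrtTwo (p : ℕ) : Fbiq p := ⟨Real.sqrt 2, subset_adjoin _ _ (by simp)⟩

/-- The element `√p` of `ℚ(√p, √2)`. -/
def sqrtPrime (p : ℕ) : Fbiq p := ⟨Real.sqrt p, subset_adjoin _ _ (by simp)⟩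

variable {p : ℕ}

theorem sqrtTwo_sq : sqrtTwo p ^ 2 = 2 :=
  Subtype.ext (sqrt_two_sq_eq_algebraMap.trans (map_ofNat _ 2))

theorem sqrtPrime_sq : sqrtPrime p ^ 2 = p :=
  Subtype.ext ((sqrt_sq_eq_algebraMap p).trans (map_natCast _ p))

theorem coe_sqrtTwo_mul_sqrtPrime :
    ((sqrtTwo p * sqrtPrime p : Fbiq p) : ℂ) = Real.sqrt (2 * p : ℕ) := by
  rw [Nat.cast_mul, Real.sqrt_mul (Nat.cast_nonneg 2)]
  push_cast
  rfl

theorem exists_eq (x : Fbiq p) : ∃ a b c d : ℚ,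
    x = a + b * sqrtPrime p + c * sqrtTwo p + d * (sqrtPrime p * sqrtTwo p) := by
  obtain ⟨a, b, c, d, hx⟩ := exists_eq_of_mem_adjoin_pair (sqrt_sq_eq_algebraMap p)
    sqrt_two_sq_eq_algebraMap x.2
  exact ⟨a, b, c, d, Subtype.ext hx⟩

theorem isReal_algebraMap : ComplexEmbedding.IsReal (algebraMap (Fbiq p) ℂ) := by
  ext x
  obtain ⟨a, b, c, d, rfl⟩ := exists_eq x
  simp [ComplexEmbedding.conjugate_coe_eq, sqrtTwo, sqrtPrime]

/-- The real embedding of the ring of integers of `ℚ(√p, √2)` given by its inclusion in `ℂ`. -/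
def toReal (p : ℕ) : 𝓞 (Fbiq p) →+* ℝ :=
  isReal_algebraMap.embedding.comp (algebraMap (𝓞 (Fbiq p)) (Fbiq p))

theorem coe_toReal (x : 𝓞 (Fbiq p)) : (toReal p x : ℂ) = (x : Fbiq p) :=
  isReal_algebraMap.coe_embedding_apply (x : Fbiq p)

instance numberField : NumberField (Fbiq p) where
  to_finiteDimensional := finiteDimensional_adjoin_pair
    (.of_pow two_pos (sqrt_sq_eq_algebraMap p ▸ isIntegral_algebraMap))
    (.of_pow two_pos (sqrt_two_sq_eq_algebraMap ▸ isIntegral_algebraMap))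

theorem isGalois_rat (hp : p.Prime) : IsGalois ℚ (Fbiq p) := by
  refine isGalois_adjoin_pair (sqrt_sq_eq_algebraMap p) sqrt_two_sq_eq_algebraMap ?_ ?_
  · exact Rat.isSquare_natCast_iff.not.2 hp.prime.not_isSquare
  · exact_mod_cast Rat.isSquare_natCast_iff.not.2 Nat.prime_two.prime.not_isSquare

/-- The automorphisms `σ`, `τ` of `ℚ(√p, √2)` negate `√2` and `√p` respectively, and fix the other
of these square roots. -/
structure IsGalPair (σ τ : Gal(Fbiq p/ℚ)) : Prop where
  left_sqrtTwo : σ (sqrtTwo p) = -sqrtTwo p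
  left_sqrtPrime : σ (sqrtPrime p) = sqrtPrime p
  right_sqrtTwo : τ (sqrtTwo p) = sqrtTwo p
  right_sqrtPrime : τ (sqrtPrime p) = -sqrtPrime p

theorem exists_isGalPair (hp : p.Prime) (hodd : Odd p) :
    ∃ σ τ : Gal(Fbiq p/ℚ), IsGalPair σ τ := by
  have := isGalois_rat hp
  have sq₂ : sqrtTwo p ^ 2 = algebraMap ℚ (Fbiq p) 2 := by rw [sqrtTwo_sq, map_ofNat]
  have sqp : sqrtPrime p ^ 2 = algebraMap ℚ (Fbiq p) p := by rw [sqrtPrime_sq, map_natCast]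
  have hp' : ¬ IsSquare (p : ℚ) := Rat.isSquare_natCast_iff.not.2 hp.prime.not_isSquare
  have h₂ : ¬ IsSquare (2 : ℚ) := mod_cast
    Rat.isSquare_natCast_iff.not.2 Nat.prime_two.prime.not_isSquare
  have h2p : ¬ IsSquare (2 * p : ℚ) := mod_cast
    Rat.isSquare_natCast_iff.not.2 (not_isSquare_two_mul hodd)
  obtain ⟨σ, hσ, hσ₂⟩ := exists_algEquiv_map_eq_neg sq₂
    (notMem_adjoin_simple_of_sq_eq sqp sq₂ h₂ (mul_comm (2 : ℚ) p ▸ h2p))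
  obtain ⟨τ, hτ, hτp⟩ := exists_algEquiv_map_eq_neg sqp
    (notMem_adjoin_simple_of_sq_eq sq₂ sqp hp' h2p)
  exact ⟨σ, τ, hσ₂, hσ _ (mem_adjoin_simple_self _ _), hτ _ (mem_adjoin_simple_self _ _), hτp⟩

namespace IsGalPair

variable {σ τ : Gal(Fbiq p/ℚ)} (h : IsGalPair σ τ)
include h

theorem left_eq_iff {x : Fbiq p} : σ x = x ↔ (x : ℂ) ∈ Qsqrt p := by
  rw [mem_Qsqrt_iff]
  constructor
  · intro hx
    obtain ⟨a, b, c, d, h_eq⟩ := exists_eq x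
    have hx' : x = a + b * sqrtPrime p := by
      rw [h_eq] at hx ⊢
      simp only [map_add, map_mul, map_ratCast, h.left_sqrtTwo, h.left_sqrtPrime] at hx
      linear_combination -(1 / 2 : Fbiq p) * hx
    exact ⟨a, b, congrArg Subtype.val hx'⟩
  · rintro ⟨a, b, hx⟩
    obtain rfl : x = a + b * sqrtPrime p := Subtype.ext hx
    simp only [map_add, map_mul, map_ratCast, h.left_sqrtPrime]

theorem right_eq_iff {x : Fbiq p} : τ x = x ↔ (x : ℂ) ∈ Qsqrt 2 := by
  rw [mem_Qsqrt_iff, Nat.cast_ofNat]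
  constructor
  · intro hx
    obtain ⟨a, b, c, d, h_eq⟩ := exists_eq x
    have hx' : x = a + c * sqrtTwo p := by
      rw [h_eq] at hx ⊢
      simp only [map_add, map_mul, map_ratCast, h.right_sqrtTwo, h.right_sqrtPrime] at hx
      linear_combination -(1 / 2 : Fbiq p) * hx
    exact ⟨a, c, congrArg Subtype.val hx'⟩
  · rintro ⟨a, c, hx⟩
    obtain rfl : x = a + c * sqrtTwo p := Subtype.ext hx
    simp only [map_add, map_mul, map_ratCast, h.right_sqrtTwo]

theorem comp_eq_iff {x : Fbiq p} : σ (τ x) = x ↔ (x : ℂ) ∈ Qsqrt (2 * p) := by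
  rw [mem_Qsqrt_iff, ← coe_sqrtTwo_mul_sqrtPrime]
  constructor
  · intro hx
    obtain ⟨a, b, c, d, h_eq⟩ := exists_eq x
    have hx' : x = a + d * (sqrtTwo p * sqrtPrime p) := by
      rw [h_eq] at hx ⊢
      simp only [map_add, map_mul, map_neg, map_ratCast, h.left_sqrtTwo, h.left_sqrtPrime,
        h.right_sqrtTwo, h.right_sqrtPrime] at hx
      linear_combination -(1 / 2 : Fbiq p) * hx
    exact ⟨a, d, congrArg Subtype.val hx'⟩
  · rintro ⟨a, d, hx⟩
    obtain rfl : x = a + d * (sqrtTwo p * sqrtPrime p) := Subtype.ext hx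
    simp only [map_add, map_mul, map_neg, map_ratCast, h.left_sqrtTwo, h.left_sqrtPrime,
      h.right_sqrtTwo, h.right_sqrtPrime, mul_neg, neg_mul, neg_neg]

theorem exists_ratCast {x : Fbiq p} (hσ : σ x = x) (hτ : τ x = x) : ∃ a : ℚ, x = a := by
  obtain ⟨a, b, hx⟩ := mem_Qsqrt_iff.1 (h.left_eq_iff.1 hσ)
  obtain rfl : x = a + b * sqrtPrime p := Subtype.ext hx
  refine ⟨a, ?_⟩
  simp only [map_add, map_mul, map_ratCast, h.right_sqrtPrime] at hτ
  linear_combination -(1 / 2 : Fbiq p) * hτ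

theorem isBiquadratic : IsBiquadratic (RingOfIntegers.mapRingHom (σ : Fbiq p →+* Fbiq p))
    (RingOfIntegers.mapRingHom (τ : Fbiq p →+* Fbiq p)) where
  involutive_left x := RingOfIntegers.ext <| by
    obtain ⟨a, b, c, d, hx⟩ := exists_eq (x : Fbiq p)
    simp [hx, h.left_sqrtTwo, h.left_sqrtPrime]
  involutive_right x := RingOfIntegers.ext <| by
    obtain ⟨a, b, c, d, hx⟩ := exists_eq (x : Fbiq p)
    simp [hx, h.right_sqrtTwo, h.right_sqrtPrime]
  commute x := RingOfIntegers.ext <| by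
    obtain ⟨a, b, c, d, hx⟩ := exists_eq (x : Fbiq p)
    simp [hx, h.left_sqrtTwo, h.left_sqrtPrime, h.right_sqrtTwo, h.right_sqrtPrime]
  exists_intCast x hσ hτ := by
    obtain ⟨a, ha⟩ := h.exists_ratCast (x := x) (congrArg (algebraMap _ (Fbiq p)) hσ)
      (congrArg (algebraMap _ (Fbiq p)) hτ)
    have hint : IsIntegral ℤ a := by
      rw [← isIntegral_algebraMap_iff (algebraMap ℚ (Fbiq p)).injective, eq_ratCast, ← ha]
      exact x.isIntegral_coe
    obtain ⟨m, rfl⟩ := IsIntegrallyClosed.isIntegral_iff.1 hint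
    exact ⟨m, RingOfIntegers.ext (by simpa using ha)⟩

theorem isSqrtTwoPrime (hp4 : p % 4 = 1) : ∃ α β θ : 𝓞 (Fbiq p),
    IsSqrtTwoPrime (RingOfIntegers.mapRingHom (σ : Fbiq p →+* Fbiq p))
      (RingOfIntegers.mapRingHom (τ : Fbiq p →+* Fbiq p)) p α β θ := by
  have hα : IsIntegral ℤ (sqrtTwo p) := .of_pow two_pos (sqrtTwo_sq ▸ mod_cast isIntegral_natCast 2)
  have hβ : IsIntegral ℤ (sqrtPrime p) := .of_pow two_pos (sqrtPrime_sq ▸ isIntegral_natCast p)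
  have hθ : IsIntegral ℤ ((1 + sqrtPrime p) / 2) := by
    obtain ⟨m, rfl⟩ : ∃ m, p = 4 * m + 1 := ⟨p / 4, by omega⟩
    refine ⟨.X ^ 2 - .X - .C (m : ℤ), ?_, ?_⟩
    · monicity!
    · have := sqrtPrime_sq (p := 4 * m + 1)
      push_cast at this
      simp only [algebraMap_int_eq, map_natCast, Polynomial.eval₂_sub, Polynomial.eval₂_X_pow,
        Polynomial.eval₂_X, Polynomial.eval₂_natCast]
      linear_combination (1 / 4) * this
  exact ⟨⟨_, hα⟩, ⟨_, hβ⟩, ⟨_, hθ⟩, {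
    __ := h.isBiquadratic
    sq_α := RingOfIntegers.ext sqrtTwo_sq
    sq_β := RingOfIntegers.ext sqrtPrime_sq
    two_mul_θ := RingOfIntegers.ext (mul_div_cancel₀ _ two_ne_zero)
    left_α := RingOfIntegers.ext h.left_sqrtTwo
    left_β := RingOfIntegers.ext h.left_sqrtPrime
    right_α := RingOfIntegers.ext h.right_sqrtTwo
    right_β := RingOfIntegers.ext h.right_sqrtPrime }⟩

theorem mul_map_eq_norm (hodd : Odd p) (h₃ : Qsqrt (2 * p) ≤ Fbiq p) (z : Qsqrt (2 * p)) :
    inclusion h₃ z * σ (inclusion h₃ z) = (Algebra.norm ℚ z : ℚ) := by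
  obtain ⟨u, v, hz⟩ := mem_Qsqrt_iff.1 z.2
  have hz' : inclusion h₃ z = u + v * (sqrtTwo p * sqrtPrime p) :=
    Subtype.ext (by rw [coe_inclusion, hz, ← coe_sqrtTwo_mul_sqrtPrime]; rfl)
  rw [norm_Qsqrt (not_isSquare_two_mul hodd) hz, hz']
  simp only [map_add, map_mul, map_ratCast, h.left_sqrtTwo, h.left_sqrtPrime]
  push_cast
  linear_combination -(v : Fbiq p) ^ 2 * (sqrtPrime p ^ 2 * sqrtTwo_sq + 2 * sqrtPrime_sq)

end IsGalPair

end Fbiq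

section Units

variable {k E : Type*} [Field k] [Field E] [Algebra k E] {K F : IntermediateField k E}

theorem mapRingHom_inclusion_injective (h : K ≤ F) :
    Function.Injective (RingOfIntegers.mapRingHom (inclusion h : K →+* F)) := fun _ _ hxy =>
  RingOfIntegers.ext (inclusion_injective h (congrArg (algebraMap (𝓞 F) F) hxy))

theorem exists_mapRingHom_inclusion_eq (h : K ≤ F) {x : 𝓞 F} (hx : ((x : F) : E) ∈ K) :
    ∃ y : 𝓞 K, RingOfIntegers.mapRingHom (inclusion h : K →+* F) y = x := by
  have hint : IsIntegral ℤ (⟨(x : F), hx⟩ : K) := by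
    rw [← isIntegral_algebraMap_iff (algebraMap K E).injective]
    exact map_isIntegral_int (algebraMap F E) x.isIntegral_coe
  exact ⟨⟨_, hint⟩, rfl⟩

theorem exists_units_map_inclusion_eq (h : K ≤ F) {u : (𝓞 F)ˣ}
    (hu : (((u : 𝓞 F) : F) : E) ∈ K) : ∃ v : (𝓞 K)ˣ,
      Units.map (RingOfIntegers.mapRingHom (inclusion h : K →+* F)).toMonoidHom v = u := by
  have hmul : (((u : 𝓞 F) : F) : E) * ((↑u⁻¹ : 𝓞 F) : F) = 1 :=
    congrArg (fun x : 𝓞 F => ((x : F) : E)) u.mul_inv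
  have hinv : (((↑u⁻¹ : 𝓞 F) : F) : E) ∈ K := by
    rw [eq_inv_of_mul_eq_one_right hmul]
    exact inv_mem hu
  obtain ⟨x, hx⟩ := exists_mapRingHom_inclusion_eq h hu
  obtain ⟨y, hy⟩ := exists_mapRingHom_inclusion_eq h hinv
  have hxy : x * y = 1 := mapRingHom_inclusion_injective h <| by
    rw [map_mul, hx, hy, map_one, Units.mul_inv]
  exact ⟨.mkOfMulEqOne x y hxy, Units.ext hx⟩

end Units

theorem IsFundamentalUnit.isFundamentalOn {K : IntermediateField ℚ ℂ} {ε : (𝓞 K)ˣ}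
    (hε : IsFundamentalUnit ε) {p : ℕ} (h : K ≤ Fbiq p) {g : Fbiq p →+* Fbiq p}
    (hg : ∀ x, g x = x ↔ (x : ℂ) ∈ K) :
    IsFundamentalOn (Fbiq.toReal p) (RingOfIntegers.mapRingHom g)
      (Units.map (RingOfIntegers.mapRingHom (inclusion h : K →+* Fbiq p)).toMonoidHom ε) where
  one_lt := by
    obtain ⟨r, hr, hεr⟩ := hε.1
    have : Fbiq.toReal p
        (Units.map (RingOfIntegers.mapRingHom (inclusion h : K →+* Fbiq p)).toMonoidHom ε) = r :=
      ofReal_injective ((Fbiq.coe_toReal _).trans hεr)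
    rwa [this]
  map_eq := RingOfIntegers.ext <| (hg _).2 ((ε : 𝓞 K) : K).2
  exists_zpow u hu := by
    have hu' : (((u : 𝓞 (Fbiq p)) : Fbiq p) : ℂ) ∈ K :=
      (hg _).1 (congrArg (algebraMap _ (Fbiq p)) hu)
    obtain ⟨v, rfl⟩ := exists_units_map_inclusion_eq h hu'
    obtain ⟨n, rfl | rfl⟩ := hε.2 v
    · exact ⟨n, .inl (map_zpow _ ε n)⟩
    · refine ⟨n, .inr ?_⟩
      rw [← map_zpow]
      exact Units.ext (RingHom.map_neg _ _)

namespace Fbiq.IsGalPair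

variable {p : ℕ} {σ τ : Gal(Fbiq p/ℚ)} (h : IsGalPair σ τ)
include h

theorem mul_map_eq_iff (hodd : Odd p) (h₃ : Qsqrt (2 * p) ≤ Fbiq p) (ε : (𝓞 (Qsqrt (2 * p)))ˣ)
    {e w : (𝓞 (Fbiq p))ˣ}
    (he : e = Units.map (RingOfIntegers.mapRingHom (inclusion h₃)).toMonoidHom ε) {q : ℚ}
    (hw : ((w : 𝓞 (Fbiq p)) : Fbiq p) = q) :
    e * Units.map (RingOfIntegers.mapRingHom (σ : Fbiq p →+* Fbiq p)) e = w ↔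
      Algebra.norm ℚ ((ε : 𝓞 (Qsqrt (2 * p))) : Qsqrt (2 * p)) = q := by
  rw [← Rat.cast_inj (α := Fbiq p), ← h.mul_map_eq_norm hodd h₃, ← hw, he, Units.ext_iff,
    RingOfIntegers.ext_iff]
  rfl

end Fbiq.IsGalPair

theorem statement_4_general (p : ℕ) (hp : p.Prime) (hp4 : p % 4 = 1)
    (h₁ : Qsqrt p ≤ Fbiq p) (h₂ : Qsqrt 2 ≤ Fbiq p) (h₃ : Qsqrt (2 * p) ≤ Fbiq p)
    (ε₁ : (𝓞 (Qsqrt p))ˣ) (ε₂ : (𝓞 (Qsqrt 2))ˣ) (ε₃ : (𝓞 (Qsqrt (2 * p)))ˣ)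
    (hε₁ : IsFundamentalUnit ε₁) (hε₂ : IsFundamentalUnit ε₂) (hε₃ : IsFundamentalUnit ε₃)
    (e₁ e₂ e₃ : (𝓞 (Fbiq p))ˣ)
    (he₁ : e₁ = Units.map (RingOfIntegers.mapRingHom (inclusion h₁)).toMonoidHom ε₁)
    (he₂ : e₂ = Units.map (RingOfIntegers.mapRingHom (inclusion h₂)).toMonoidHom ε₂)
    (he₃ : e₃ = Units.map (RingOfIntegers.mapRingHom (inclusion h₃)).toMonoidHom ε₃) :
    ((∃ u : (𝓞 (Fbiq p))ˣ, u ^ 2 = e₁ * e₂ * e₃ ∧ IsFundamentalSystem u e₂ e₃) ↔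
      Algebra.norm ℚ ((ε₃ : 𝓞 (Qsqrt (2 * p))) : Qsqrt (2 * p)) = -1) ∧
    ((∃ u : (𝓞 (Fbiq p))ˣ, u ^ 2 = e₃ ∧ IsFundamentalSystem e₁ e₂ u) ↔
      Algebra.norm ℚ ((ε₃ : 𝓞 (Qsqrt (2 * p))) : Qsqrt (2 * p)) = 1) := by
  have hodd : Odd p := Nat.odd_iff.2 (by omega)
  obtain ⟨σ, τ, h⟩ := Fbiq.exists_isGalPair hp hodd
  obtain ⟨α, β, θ, hs⟩ := h.isSqrtTwoPrime hp4
  have ht : IsUnitTriple (Fbiq.toReal p) _ _ e₁ e₂ e₃ := hs.isUnitTriple hp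
    (he₁ ▸ hε₁.isFundamentalOn h₁ fun _ => h.left_eq_iff)
    (he₂ ▸ hε₂.isFundamentalOn h₂ fun _ => h.right_eq_iff)
    (he₃ ▸ hε₃.isFundamentalOn (g := (σ : Fbiq p →+* Fbiq p).comp τ) h₃ fun _ => h.comp_eq_iff)
  rw [← h.mul_map_eq_iff hodd h₃ ε₃ (w := -1) he₃ (by simp),
    ← h.mul_map_eq_iff hodd h₃ ε₃ (w := 1) he₃ (by simp)]
  exact ⟨ht.exists_sq_eq_mul_iff hs hp, ht.exists_sq_eq_iff hs hp⟩

theorem statement_4 (p : ℕ) (hp : p.Prime) (hp8 : p % 8 = 1)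
    (h₁ : Qsqrt p ≤ Fbiq p) (h₂ : Qsqrt 2 ≤ Fbiq p) (h₃ : Qsqrt (2 * p) ≤ Fbiq p)
    (ε₁ : (𝓞 (Qsqrt p))ˣ) (ε₂ : (𝓞 (Qsqrt 2))ˣ) (ε₃ : (𝓞 (Qsqrt (2 * p)))ˣ)
    (hε₁ : IsFundamentalUnit ε₁) (hε₂ : IsFundamentalUnit ε₂) (hε₃ : IsFundamentalUnit ε₃)
    -- the images of ε₁, ε₂, ε₃ in the unit group of F :
    (e₁ e₂ e₃ : (𝓞 (Fbiq p))ˣ)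
    (he₁ : e₁ = Units.map (RingOfIntegers.mapRingHom (IntermediateField.inclusion h₁)).toMonoidHom ε₁)
    (he₂ : e₂ = Units.map (RingOfIntegers.mapRingHom (IntermediateField.inclusion h₂)).toMonoidHom ε₂)
    (he₃ : e₃ = Units.map (RingOfIntegers.mapRingHom (IntermediateField.inclusion h₃)).toMonoidHom ε₃) :
    ((∃ u : (𝓞 (Fbiq p))ˣ, u ^ 2 = e₁ * e₂ * e₃ ∧ IsFundamentalSystem u e₂ e₃) ↔
      Algebra.norm ℚ ((ε₃ : 𝓞 (Qsqrt (2 * p))) : Qsqrt (2 * p)) = -1) ∧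
    ((∃ u : (𝓞 (Fbiq p))ˣ, u ^ 2 = e₃ ∧ IsFundamentalSystem e₁ e₂ u) ↔
      Algebra.norm ℚ ((ε₃ : 𝓞 (Qsqrt (2 * p))) : Qsqrt (2 * p)) = 1) :=
  statement_4_general p hp (by omega) h₁ h₂ h₃ ε₁ ε₂ ε₃ hε₁ hε₂ hε₃ e₁ e₂ e₃ he₁ he₂ he₃
end
end

section
/- Let p be a prime with p ≡ 1 (mod 8), F = ℚ(√p, √2) and k* = ℚ(√2, √p, i) = F(i). Then every unit of O_{k*} is the product of a root of unity of k* (a power of ζ₈) and a unit of O_F; that is, O_{k*}^× = ⟨ζ₈⟩ · O_F^×, so the Hasse unit index Q_{k*} = [O_{k*}^× : W_{k*}·O_F^×] equals 1. -/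
/-!
Let `u` be a unit of `k* = F(i)`. Since `k*` is a CM field, `u / ū` is a root of unity. The Galois
group of `k*` has exponent `2`, which forces the order `N` of a root of unity to satisfy
`a ^ 2 ≡ 1 (mod N)` for all `a` prime to `N`, hence `N ∣ 24`; and `-3` is not a square in `k*`, so
even `N ∣ 8`. Thus `u = ζ₈ ^ k ū`.

If `k = 2 m`, then `u / ζ₈ ^ m` is real, hence a unit of `F`. If `k = 2 m + 1`, then
`a = u / (ζ₈ ^ m (1 + ζ₈))` lies in `F` and, as `(1 + ζ₈) ^ 2 = ζ₈ (2 + √2)`, the number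
`(2 + √2) a ^ 2` is a unit. Multiplying it by its conjugate over `ℚ(√p)` gives a unit `2 b ^ 2` with
`b = x + y √p`, whose norm and trace show that `4 (x ^ 2 - p y ^ 2) ^ 2 = 1` and
`4 (x ^ 2 + p y ^ 2) ∈ ℤ`. This is impossible modulo `4` for `p ≡ 1 (mod 4)`.
-/

/- STATEMENT 5: Let p ≡ 1 (mod 8) be prime, F = ℚ(√p, √2), k* = ℚ(√2, √p, i) = F(i).
Then every unit of O_{k*} is a power of ζ₈ times a unit of O_F; in particular the Hasse
unit index Q_{k*} = [O_{k*}^× : W_{k*}·O_F^×] equals 1. -/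

open Complex NumberField IntermediateField nonZeroDivisors

noncomputable section

/-- k* = ℚ(√2, √p, i) as a subfield of ℂ. -/
def kstar (p : ℕ) : IntermediateField ℚ ℂ :=
  ℚ⟮(Real.sqrt 2 : ℂ), (Real.sqrt p : ℂ), (Complex.I : ℂ)⟯

/-- A primitive 8-th root of unity in ℂ. -/
def zeta8 : ℂ := Complex.exp (Real.pi * Complex.I / 4)

section QuadraticExtension

variable {K L : Type*} [Field K] [Field L] [Algebra K L] {d : L} {e : K}

lemma isIntegral_of_sq_eq_algebraMap (hd : d ^ 2 = algebraMap K L e) : IsIntegral K d :=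
  .of_pow two_pos (hd ▸ isIntegral_algebraMap)

lemma exists_eq_add_mul_of_mem_adjoin (hd : d ^ 2 = algebraMap K L e) {z : L} (hz : z ∈ K⟮d⟯) :
    ∃ a b : K, z = algebraMap K L a + algebraMap K L b * d := by
  rw [← mem_toSubalgebra, adjoin_simple_toSubalgebra_of_isAlgebraic
    (isIntegral_of_sq_eq_algebraMap hd).isAlgebraic] at hz
  induction hz using Algebra.adjoin_induction with
  | mem x hx => exact ⟨0, 1, by simpa using hx⟩
  | algebraMap r => exact ⟨r, 0, by simp⟩
  | add x y _ _ hx hy =>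
    obtain ⟨a, b, rfl⟩ := hx
    obtain ⟨a', b', rfl⟩ := hy
    exact ⟨a + a', b + b', by simp only [map_add]; ring⟩
  | mul x y _ _ hx hy =>
    obtain ⟨a, b, rfl⟩ := hx
    obtain ⟨a', b', rfl⟩ := hy
    refine ⟨a * a' + b * b' * e, a * b' + a' * b, ?_⟩
    simp only [map_add, map_mul, ← hd]
    ring

/- If `z = a + b * d` with `a * b ≠ 0`, then `z ^ 2 = c` expresses `d` through `K`. -/
lemma isSquare_or_isSquare_mul_of_sq_mem_adjoin (h2 : (2 : K) ≠ 0) (hd : d ^ 2 = algebraMap K L e)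
    {c : K} {z : L} (hz : z ∈ K⟮d⟯) (hc : z ^ 2 = algebraMap K L c) :
    IsSquare c ∨ IsSquare (c * e) := by
  obtain ⟨a, b, rfl⟩ := exists_eq_add_mul_of_mem_adjoin hd hz
  have inj := FaithfulSMul.algebraMap_injective K L
  have expand : algebraMap K L (2 * a * b) * d = algebraMap K L (c - a ^ 2 - b ^ 2 * e) := by
    simp only [map_sub, map_mul, map_pow, map_ofNat, ← hc, ← hd]
    ring
  by_cases hab : a * b = 0
  · have hc' : c = a ^ 2 + b ^ 2 * e := by
      rw [mul_assoc, hab, mul_zero, map_zero, zero_mul, eq_comm, map_eq_zero] at expand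
      linear_combination expand
    rcases mul_eq_zero.mp hab with rfl | rfl
    · exact .inr ⟨b * e, by rw [hc']; ring⟩
    · exact .inl ⟨a, by rw [hc']; ring⟩
  · obtain ⟨δ, rfl⟩ : ∃ δ, algebraMap K L δ = d := by
      refine ⟨(c - a ^ 2 - b ^ 2 * e) / (2 * a * b), ?_⟩
      have h : 2 * a * b ≠ 0 := by rw [mul_assoc]; exact mul_ne_zero h2 hab
      rw [map_div₀, ← expand, mul_div_cancel_left₀ _ ((map_ne_zero _).mpr h)]
    exact .inl ⟨a + b * δ, inj (by rw [← hc]; simp only [map_add, map_mul]; ring)⟩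

lemma isConjRoot_neg_of_not_isSquare (hd : d ^ 2 = algebraMap K L e) (he : ¬ IsSquare e) :
    IsConjRoot K d (-d) := by
  have hmin (x : L) (hx : x ^ 2 = algebraMap K L e) : minpoly K x = .X ^ 2 - .C e :=
    (minpoly.eq_of_irreducible_of_monic
      (X_pow_sub_C_irreducible_of_prime Nat.prime_two fun b hb => he ⟨b, by rw [← hb, sq]⟩)
      (by simp [hx]) (Polynomial.monic_X_pow_sub_C e two_ne_zero)).symm
  rw [IsConjRoot, hmin d hd, hmin (-d) (by rw [neg_sq, hd])]

end QuadraticExtension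

/-- A unit of the ring of algebraic integers of a field. The condition `z ≠ 0` excludes
`0`, since `0⁻¹ = 0` is integral. -/
structure IsAlgebraicUnit {K : Type*} [Field K] (z : K) : Prop where
  ne_zero : z ≠ 0
  isIntegral : IsIntegral ℤ z
  isIntegral_inv : IsIntegral ℤ z⁻¹

namespace IsAlgebraicUnit

variable {K L : Type*} [Field K] [Field L] {z w : K}

lemma of_pow_eq_one {n : ℕ} (hn : 0 < n) (hz : z ^ n = 1) : IsAlgebraicUnit z where
  ne_zero := by rintro rfl; simp [hn.ne'] at hz
  isIntegral := .of_pow hn (hz ▸ isIntegral_one)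
  isIntegral_inv := .of_pow hn (by simp only [inv_pow, hz, inv_one, isIntegral_one])

lemma inv (hz : IsAlgebraicUnit z) : IsAlgebraicUnit z⁻¹ where
  ne_zero := inv_ne_zero hz.ne_zero
  isIntegral := hz.isIntegral_inv
  isIntegral_inv := by simpa only [inv_inv] using hz.isIntegral

lemma mul (hz : IsAlgebraicUnit z) (hw : IsAlgebraicUnit w) : IsAlgebraicUnit (z * w) where
  ne_zero := mul_ne_zero hz.ne_zero hw.ne_zero
  isIntegral := hz.isIntegral.mul hw.isIntegral
  isIntegral_inv := by
    simpa only [mul_inv] using hz.isIntegral_inv.mul hw.isIntegral_inv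

lemma div (hz : IsAlgebraicUnit z) (hw : IsAlgebraicUnit w) : IsAlgebraicUnit (z / w) := by
  simpa only [div_eq_mul_inv] using hz.mul hw.inv

lemma pow (hz : IsAlgebraicUnit z) (n : ℕ) : IsAlgebraicUnit (z ^ n) where
  ne_zero := pow_ne_zero n hz.ne_zero
  isIntegral := hz.isIntegral.pow n
  isIntegral_inv := by simpa only [inv_pow] using hz.isIntegral_inv.pow n

lemma map_iff (f : K →+* L) : IsAlgebraicUnit (f z) ↔ IsAlgebraicUnit z := by
  have integral (x : K) : IsIntegral ℤ (f x) ↔ IsIntegral ℤ x :=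
    isIntegral_algHom_iff f.toIntAlgHom f.injective
  refine ⟨fun h => ⟨(map_ne_zero f).mp h.1, (integral z).mp h.2, (integral z⁻¹).mp ?_⟩,
    fun h => ⟨(map_ne_zero f).mpr h.1, (integral z).mpr h.2, ?_⟩⟩
  · simpa only [map_inv₀] using h.isIntegral_inv
  · simpa only [map_inv₀] using (integral z⁻¹).mpr h.isIntegral_inv

lemma coe_units (u : (𝓞 K)ˣ) : IsAlgebraicUnit ((u : 𝓞 K) : K) where
  ne_zero := RingOfIntegers.coe_ne_zero_iff.mpr u.ne_zero
  isIntegral := RingOfIntegers.isIntegral_coe _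
  isIntegral_inv := by
    rw [← map_units_inv]
    exact RingOfIntegers.isIntegral_coe _

lemma exists_units (hz : IsAlgebraicUnit z) : ∃ u : (𝓞 K)ˣ, ((u : 𝓞 K) : K) = z :=
  ⟨⟨⟨z, hz.isIntegral⟩, ⟨z⁻¹, hz.isIntegral_inv⟩, RingOfIntegers.ext (mul_inv_cancel₀ hz.ne_zero),
    RingOfIntegers.ext (inv_mul_cancel₀ hz.ne_zero)⟩, rfl⟩

lemma exists_units_eq_coe [Algebra K L] {S : IntermediateField K L} {x : L} (hx : IsAlgebraicUnit x)
    (hxS : x ∈ S) : ∃ u : (𝓞 S)ˣ, (((u : 𝓞 S) : S) : L) = x := by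
  have hunit : IsAlgebraicUnit (⟨x, hxS⟩ : S) := (map_iff (algebraMap S L)).mp hx
  obtain ⟨u, hu⟩ := hunit.exists_units
  exact ⟨u, congrArg Subtype.val hu⟩

lemma eq_one_or_eq_neg_one {q : ℚ} (hq : IsAlgebraicUnit q) : q = 1 ∨ q = -1 := by
  obtain ⟨m, rfl⟩ := IsIntegrallyClosed.isIntegral_iff.mp hq.isIntegral
  obtain ⟨n, hn⟩ := IsIntegrallyClosed.isIntegral_iff.mp hq.isIntegral_inv
  have hmn : m * n = 1 := by
    have := mul_inv_cancel₀ hq.ne_zero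
    rw [← hn, eq_intCast, eq_intCast] at this
    exact_mod_cast this
  simpa using (Int.isUnit_iff.mp (.of_mul_eq_one n hmn)).imp
    (congrArg (Int.cast : ℤ → ℚ)) (congrArg (Int.cast : ℤ → ℚ))

lemma aeval_of_isConjRoot [Algebra K L] {x y : L} (hx : IsIntegral K x) (hxy : IsConjRoot K x y)
    {f : Polynomial K} (h : IsAlgebraicUnit (Polynomial.aeval x f)) :
    IsAlgebraicUnit (Polynomial.aeval y f) := by
  have hy : y ∈ (minpoly K x).aroots L :=
    Polynomial.mem_aroots.mpr ⟨minpoly.ne_zero hx, hxy ▸ minpoly.aeval K y⟩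
  let φ : K⟮x⟯ →ₐ[K] L := (algHomAdjoinIntegralEquiv K hx).symm ⟨y, hy⟩
  have hφ : φ (AdjoinSimple.gen K x) = y := algHomAdjoinIntegralEquiv_symm_apply_gen K hx ⟨y, hy⟩
  rw [← AdjoinSimple.algebraMap_gen K x, Polynomial.aeval_algebraMap_apply, map_iff] at h
  rw [← hφ, Polynomial.aeval_algHom_apply]
  exact (map_iff φ.toRingHom).mpr h

end IsAlgebraicUnit

section SquaresModFour

lemma exists_eq_intCast_of_sq_eq {q : ℚ} {n : ℤ} (h : q ^ 2 = n) : ∃ m : ℤ, q = m := by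
  obtain ⟨m, hm⟩ := IsIntegrallyClosed.exists_algebraMap_eq_of_isIntegral_pow (R := ℤ) two_pos
    (show IsIntegral ℤ (q ^ 2) by rw [h]; exact isIntegral_algebraMap)
  exact ⟨m, hm.symm⟩

lemma exists_eq_intCast_of_two_mul_sq_eq {q : ℚ} {n : ℤ} (h : 2 * q ^ 2 = n) :
    ∃ m : ℤ, q = m := by
  obtain ⟨k, hk⟩ := exists_eq_intCast_of_sq_eq (q := 2 * q) (n := 2 * n)
    (by push_cast; linear_combination 2 * h)
  have hk2 : k ^ 2 = 2 * n := by
    have : (k : ℚ) ^ 2 = 2 * n := by rw [← hk]; linear_combination 2 * h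
    exact_mod_cast this
  obtain ⟨m, rfl⟩ : 2 ∣ k := Int.prime_two.dvd_of_dvd_pow ⟨n, hk2⟩
  exact ⟨m, by push_cast at hk; linarith⟩

lemma not_isSquare_natCast_of_mod_four {n : ℕ} (hn : n % 4 = 2 ∨ n % 4 = 3) :
    ¬ IsSquare (n : ℚ) := by
  rw [Rat.isSquare_natCast_iff]
  rintro ⟨m, rfl⟩
  have : m % 4 < 4 := Nat.mod_lt _ (by norm_num)
  interval_cases h : m % 4 <;> simp [Nat.mul_mod, h] at hn

/- With `X = 2 * x`, `Y = 2 * p * y` and `ε = 2 * (x ^ 2 - p * y ^ 2) = ±1`, the hypotheses make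
`X` and `Y` integers such that `Y ^ 2 = p * (X ^ 2 - 2 * ε)`, that is
`Y ^ 2 ≡ X ^ 2 + 2` modulo `4`. -/
lemma four_mul_sq_sub_mul_sq_ne_one {p : ℕ} (hp : p % 4 = 1) {x y : ℚ} {t : ℤ}
    (ht : 4 * (x ^ 2 + p * y ^ 2) = t) : 4 * (x ^ 2 - p * y ^ 2) ^ 2 ≠ 1 := by
  intro h
  obtain ⟨ε, hε, hε1⟩ : ∃ ε : ℤ, 2 * (x ^ 2 - p * y ^ 2) = ε ∧ (ε = 1 ∨ ε = -1) := by
    have hsq : (2 * (x ^ 2 - p * y ^ 2)) ^ 2 = 1 := by linear_combination h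
    rcases sq_eq_one_iff.mp hsq with h | h
    · exact ⟨1, by simpa using h, .inl rfl⟩
    · exact ⟨-1, by simpa using h, .inr rfl⟩
  obtain ⟨X, hX⟩ := exists_eq_intCast_of_two_mul_sq_eq (q := 2 * x) (n := t + 2 * ε)
    (by push_cast; linear_combination ht + 2 * hε)
  have hY2 : (2 * p * y) ^ 2 = ((p * (X ^ 2 - 2 * ε) : ℤ) : ℚ) := by
    push_cast
    rw [← hX, ← hε]
    ring
  obtain ⟨Y, hY⟩ := exists_eq_intCast_of_sq_eq hY2
  rw [hY] at hY2
  have hmod : (Y : ZMod 4) ^ 2 = X ^ 2 + 2 := by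
    have hp1 : (p : ZMod 4) = 1 := by
      rw [← Nat.cast_one, ZMod.natCast_eq_natCast_iff']; exact hp
    have hY4 : ((Y ^ 2 : ℤ) : ZMod 4) = (p * (X ^ 2 - 2 * ε) : ℤ) := by
      congr 1; exact_mod_cast hY2
    have h2ε : -2 * (ε : ZMod 4) = 2 := by rcases hε1 with rfl | rfl <;> decide
    push_cast [hp1] at hY4
    linear_combination hY4 + h2ε
  exact (by decide : ∀ a b : ZMod 4, a ^ 2 ≠ b ^ 2 + 2) _ _ hmod

variable {L : Type*} [Field L] [Algebra ℚ L] {p : ℕ} {d s : L}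

lemma not_isSquare_natCast_adjoin_of_mod_four (hp : p % 4 = 1) (hd : d ^ 2 = p) {n : ℕ}
    (hn : n % 4 = 2 ∨ n % 4 = 3) : ¬ IsSquare (n : ℚ⟮d⟯) := by
  rintro ⟨z, hz⟩
  have hzn : (z : L) ^ 2 = algebraMap ℚ L n := by
    rw [map_natCast, sq]; exact_mod_cast (congrArg Subtype.val hz).symm
  rcases isSquare_or_isSquare_mul_of_sq_mem_adjoin two_ne_zero (e := (p : ℚ)) (by simpa using hd)
    z.2 hzn with h | h
  · exact not_isSquare_natCast_of_mod_four hn h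
  · rw [← Nat.cast_mul] at h
    refine not_isSquare_natCast_of_mod_four ?_ h
    simpa [Nat.mul_mod, hp] using hn

/- The product `N` and the sum `T` of the two units are a rational unit and a rational integer. -/
lemma not_isAlgebraicUnit_two_mul_add_sq_and_sub_sq (hp : p % 4 = 1) (hd : d ^ 2 = p) (x y : ℚ) :
    ¬ (IsAlgebraicUnit (2 * (algebraMap ℚ L x + algebraMap ℚ L y * d) ^ 2) ∧
      IsAlgebraicUnit (2 * (algebraMap ℚ L x - algebraMap ℚ L y * d) ^ 2)) := by
  rintro ⟨hadd, hsub⟩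
  have hN : IsAlgebraicUnit (4 * (x ^ 2 - p * y ^ 2) ^ 2) := by
    have hprod := hadd.mul hsub
    rw [show 2 * (algebraMap ℚ L x + algebraMap ℚ L y * d) ^ 2 *
        (2 * (algebraMap ℚ L x - algebraMap ℚ L y * d) ^ 2) =
        algebraMap ℚ L (4 * (x ^ 2 - p * y ^ 2) ^ 2) by
      simp only [map_mul, map_sub, map_pow, map_ofNat, map_natCast, ← hd]; ring] at hprod
    exact (IsAlgebraicUnit.map_iff _).mp hprod
  have hT : IsIntegral ℤ (4 * (x ^ 2 + p * y ^ 2)) := by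
    have hsum := hadd.isIntegral.add hsub.isIntegral
    rw [show 2 * (algebraMap ℚ L x + algebraMap ℚ L y * d) ^ 2 +
        2 * (algebraMap ℚ L x - algebraMap ℚ L y * d) ^ 2 =
        algebraMap ℚ L (4 * (x ^ 2 + p * y ^ 2)) by
      simp only [map_mul, map_add, map_pow, map_ofNat, map_natCast, ← hd]; ring] at hsum
    exact (isIntegral_algebraMap_iff (algebraMap ℚ L).injective).mp hsum
  obtain ⟨t, ht⟩ := IsIntegrallyClosed.isIntegral_iff.mp hT
  refine four_mul_sq_sub_mul_sq_ne_one hp ht.symm (hN.eq_one_or_eq_neg_one.resolve_right ?_)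
  exact (neg_one_lt_zero.trans_le (by positivity)).ne'

open Polynomial in
lemma not_isAlgebraicUnit_two_mul_sq (hp : p % 4 = 1) (hd : d ^ 2 = p) {b : L} (hb : b ∈ ℚ⟮d⟯) :
    ¬ IsAlgebraicUnit (2 * b ^ 2) := by
  intro hu
  have hd' : d ^ 2 = algebraMap ℚ L p := by rw [hd, map_natCast]
  obtain ⟨x, y, rfl⟩ := exists_eq_add_mul_of_mem_adjoin hd' hb
  by_cases he : IsSquare (p : ℚ)
  · obtain ⟨q, hq⟩ : ∃ q : ℚ, algebraMap ℚ L q = algebraMap ℚ L x + algebraMap ℚ L y * d := by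
      obtain ⟨r, hr⟩ := he
      rw [hr, map_mul, ← sq, sq_eq_sq_iff_eq_or_eq_neg] at hd'
      rcases hd' with rfl | rfl
      · exact ⟨x + y * r, by rw [map_add, map_mul]⟩
      · exact ⟨x - y * r, by rw [map_sub, map_mul, mul_neg, sub_eq_add_neg]⟩
    rw [← hq] at hu
    exact not_isAlgebraicUnit_two_mul_add_sq_and_sub_sq hp hd q 0 (by simpa using hu)
  · refine not_isAlgebraicUnit_two_mul_add_sq_and_sub_sq hp hd x y ⟨hu, ?_⟩
    have hconj := IsAlgebraicUnit.aeval_of_isConjRoot (isIntegral_of_sq_eq_algebraMap hd')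
      (isConjRoot_neg_of_not_isSquare hd' he) (f := 2 * (C x + C y * X) ^ 2)
      (by simpa [map_ofNat] using hu)
    simpa [map_ofNat, sub_eq_add_neg] using hconj

open Polynomial in
/- Multiplying by the conjugate `(2 - s) * (x - y * s) ^ 2` gives `2 * b ^ 2` with
`b ∈ ℚ⟮d⟯`. -/
lemma not_isAlgebraicUnit_two_add_mul_sq (hp : p % 4 = 1) (hd : d ^ 2 = p) (hs : s ^ 2 = 2) {a : L}
    (ha : a ∈ adjoin ℚ⟮d⟯ {s}) : ¬ IsAlgebraicUnit ((2 + s) * a ^ 2) := by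
  intro hu
  have hs' : s ^ 2 = algebraMap ℚ⟮d⟯ L 2 := by rw [hs, map_ofNat]
  obtain ⟨x, y, rfl⟩ := exists_eq_add_mul_of_mem_adjoin hs' ha
  have h2 : ¬ IsSquare (2 : ℚ⟮d⟯) := by
    exact_mod_cast not_isSquare_natCast_adjoin_of_mod_four hp hd (n := 2) (.inl rfl)
  have hconj : IsAlgebraicUnit
      ((2 - s) * (algebraMap ℚ⟮d⟯ L x - algebraMap ℚ⟮d⟯ L y * s) ^ 2) := by
    have := IsAlgebraicUnit.aeval_of_isConjRoot (isIntegral_of_sq_eq_algebraMap hs')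
      (isConjRoot_neg_of_not_isSquare hs' h2) (f := (2 + X) * (C x + C y * X) ^ 2)
      (by simpa [map_ofNat] using hu)
    simpa [map_ofNat, sub_eq_add_neg] using this
  refine not_isAlgebraicUnit_two_mul_sq hp hd (x ^ 2 - 2 * y ^ 2).2 ?_
  have hmul : (2 + s) * (2 - s) = 2 := by linear_combination -hs
  have hnorm : (algebraMap ℚ⟮d⟯ L x + algebraMap ℚ⟮d⟯ L y * s) *
      (algebraMap ℚ⟮d⟯ L x - algebraMap ℚ⟮d⟯ L y * s) = algebraMap ℚ⟮d⟯ L (x ^ 2 - 2 * y ^ 2) := by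
    simp only [map_sub, map_mul, map_pow, map_ofNat]
    linear_combination -algebraMap ℚ⟮d⟯ L y ^ 2 * hs
  have := hu.mul hconj
  rwa [mul_mul_mul_comm, ← mul_pow, hmul, hnorm] at this

end SquaresModFour

section Multiquadratic

variable {F E : Type*} [Field F] [Field E] [Algebra F E] {S : Set E}

lemma splits_minpoly_of_sq_eq_algebraMap {x : E} {e : F} (hx : x ^ 2 = algebraMap F E e) :
    ((minpoly F x).map (algebraMap F E)).Splits := by
  have hdvd : minpoly F x ∣ .X ^ 2 - .C e := minpoly.dvd F x (by simp [hx])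
  have hfactor : Polynomial.map (algebraMap F E) (.X ^ 2 - .C e) = (.X - .C x) * (.X + .C x) := by
    simp only [Polynomial.map_sub, Polynomial.map_pow, Polynomial.map_X, Polynomial.map_C, ← hx,
      map_pow]
    ring
  have hmap := Polynomial.map_dvd (algebraMap F E) hdvd
  rw [hfactor] at hmap
  exact Polynomial.Splits.of_dvd (.mul (.X_sub_C x) (.X_add_C x))
    (mul_ne_zero (Polynomial.X_sub_C_ne_zero x) (Polynomial.X_add_C_ne_zero x)) hmap

lemma normal_adjoin_of_forall_sq_eq (hS : ∀ s ∈ S, ∃ e, s ^ 2 = algebraMap F E e) :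
    Normal F (adjoin F S) := by
  have hsplits (s : E) (hs : s ∈ S) : IsIntegral F s ∧
      ((minpoly F s).map (algebraMap F (adjoin F S))).Splits := by
    obtain ⟨e, he⟩ := hS s hs
    have := splits_minpoly_of_sq_eq_algebraMap (F := F)
      (x := (⟨s, subset_adjoin F S hs⟩ : adjoin F S)) (e := e) (Subtype.ext he)
    rw [minpoly_eq] at this
    exact ⟨isIntegral_of_sq_eq_algebraMap he, this⟩
  have := isAlgebraic_adjoin fun s hs => (hsplits s hs).1
  refine normal_iff.mpr fun x => ⟨Algebra.IsIntegral.isIntegral x, ?_⟩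
  rw [minpoly_eq]
  exact splits_of_mem_adjoin F E hsplits x.2

lemma algEquiv_adjoin_mul_self (hS : ∀ s ∈ S, ∃ e, s ^ 2 = algebraMap F E e)
    (g : Gal(adjoin F S/F)) : g * g = 1 := by
  refine AlgEquiv.coe_toAlgHom_injective (adjoin_algHom_ext F fun s hs => ?_)
  obtain ⟨e, he⟩ := hS s hs
  let t : adjoin F S := ⟨s, subset_adjoin F S hs⟩
  have ht : t ^ 2 = algebraMap F _ e := Subtype.ext he
  have hg : g t ^ 2 = t ^ 2 := by rw [← map_pow, ht, g.commutes]
  change g (g t) = t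
  rcases sq_eq_sq_iff_eq_or_eq_neg.mp hg with h | h <;> simp [h]

lemma isAbelianGalois_adjoin [CharZero F] (hS : ∀ s ∈ S, ∃ e, s ^ 2 = algebraMap F E e) :
    IsAbelianGalois F (adjoin F S) where
  toIsGalois := have := normal_adjoin_of_forall_sq_eq hS; .mk
  toIsMulCommutative := by
    have hG := algEquiv_adjoin_mul_self hS
    refine .of_comm fun g h => ?_
    rw [← inv_eq_of_mul_eq_one_right (hG (g * h)), mul_inv_rev, inv_eq_of_mul_eq_one_right (hG g),
      inv_eq_of_mul_eq_one_right (hG h)]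

end Multiquadratic

section RootsOfUnity

variable {K : Type*} [Field K] [CharZero K] [Normal ℚ K] {w : K} {n : ℕ}

/- Some automorphism maps `w` to `w ^ a`, and it is an involution. -/
lemma pow_mul_self_eq_of_isPrimitiveRoot {a : ℕ} (hG : ∀ g : Gal(K/ℚ), g * g = 1)
    (hw : IsPrimitiveRoot w n) (hn : 0 < n) (ha : a.Coprime n) : w ^ (a * a) = w := by
  have hconj : IsConjRoot ℚ (w ^ a) w := by
    rw [IsConjRoot, ← Polynomial.cyclotomic_eq_minpoly_rat hw hn,
      ← Polynomial.cyclotomic_eq_minpoly_rat (hw.pow_of_coprime a ha) hn]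
  obtain ⟨g, hg⟩ := hconj.exists_algEquiv
  have hgg : g (g w) = w := DFunLike.congr_fun (hG g) w
  rw [hg, map_pow, hg, ← pow_mul] at hgg
  exact hgg

/- Take `a = 5` if the order of `w` is prime to `5`. Otherwise a power of `w` has order `5`, and
`a = 2` gives a contradiction. -/
lemma pow_twentyfour_eq_one (hG : ∀ g : Gal(K/ℚ), g * g = 1) (hn : 0 < n)
    (hw : w ^ n = 1) : w ^ 24 = 1 := by
  have pow_eq_one {v : K} {m : ℕ} (k : ℕ) (hv : IsPrimitiveRoot v m) (hm : 0 < m)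
      (hk : (k + 1).Coprime m) : v ^ (k * (k + 2)) = 1 := by
    have h := pow_mul_self_eq_of_isPrimitiveRoot hG hv hm hk
    refine mul_right_cancel₀ (hv.ne_zero hm.ne') ?_
    rw [one_mul, ← pow_succ, show k * (k + 2) + 1 = (k + 1) * (k + 1) by ring, h]
  have hprim := IsPrimitiveRoot.orderOf w
  have hpos : 0 < orderOf w := orderOf_pos_iff.mpr (isOfFinOrder_iff_pow_eq_one.mpr ⟨n, hn, hw⟩)
  by_cases h5 : 5 ∣ orderOf w
  · obtain ⟨m, hm⟩ := h5
    have hv : IsPrimitiveRoot (w ^ m) 5 := hprim.pow hpos (by rw [hm, mul_comm])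
    have := hv.dvd_of_pow_eq_one 3 (pow_eq_one 1 hv (by norm_num) (by norm_num))
    norm_num at this
  · exact pow_eq_one 4 hprim hpos ((Nat.Prime.coprime_iff_not_dvd (by norm_num)).mpr h5)

lemma pow_eight_eq_one (hG : ∀ g : Gal(K/ℚ), g * g = 1) (h3 : ¬ IsSquare (-3 : K)) (hn : 0 < n)
    (hw : w ^ n = 1) : w ^ 8 = 1 := by
  have h24 : (w ^ 8 - 1) * ((w ^ 8) ^ 2 + w ^ 8 + 1) = 0 := by
    linear_combination pow_twentyfour_eq_one hG hn hw
  rcases mul_eq_zero.mp h24 with h | h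
  · exact sub_eq_zero.mp h
  · exact absurd ⟨2 * w ^ 8 + 1, by linear_combination -4 * h⟩ h3

end RootsOfUnity

lemma exists_div_complexConj_pow_eq_one {K : Type*} [Field K] [NumberField K] [IsCMField K]
    (u : (𝓞 K)ˣ) :
    ∃ n > 0, (((u : 𝓞 K) : K) / IsCMField.complexConj K ((u : 𝓞 K) : K)) ^ n = 1 := by
  let ζ := IsCMField.unitsMulComplexConjInv K u
  obtain ⟨n, hn, h⟩ := isOfFinOrder_iff_pow_eq_one.mp ((CommGroup.mem_torsion _).mp ζ.2)
  refine ⟨n, hn, ?_⟩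
  have := congrArg (fun v : (𝓞 K)ˣ => ((v : 𝓞 K) : K)) h
  simpa [ζ, IsCMField.unitsMulComplexConjInv_apply, div_eq_mul_inv] using this

section Fields

variable {p : ℕ} {x : ℂ}

lemma ofReal_sqrt_natCast_sq (n : ℕ) : (√(n : ℝ) : ℂ) ^ 2 = n := by
  rw [← Complex.ofReal_pow, Real.sq_sqrt n.cast_nonneg, Complex.ofReal_natCast]

lemma ofReal_sqrt_two_sq : (√2 : ℂ) ^ 2 = 2 := by
  exact_mod_cast ofReal_sqrt_natCast_sq 2

lemma mem_Fbiq_iff : x ∈ Fbiq p ↔ x ∈ adjoin ℚ⟮(√p : ℂ)⟯ {(√2 : ℂ)} := by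
  have h : restrictScalars ℚ (adjoin ℚ⟮(√p : ℂ)⟯ {(√2 : ℂ)}) = Fbiq p :=
    adjoin_adjoin_left ℚ {(√p : ℂ)} {(√2 : ℂ)}
  rw [← h, mem_restrictScalars]

lemma mem_kstar_iff : x ∈ kstar p ↔ x ∈ adjoin (Fbiq p) {I} := by
  have h : restrictScalars ℚ (adjoin (Fbiq p) {I}) = kstar p := by
    refine (adjoin_adjoin_left ℚ {(√p : ℂ), (√2 : ℂ)} {I}).trans (congrArg (adjoin ℚ) ?_)
    grind
  rw [← h, mem_restrictScalars]

lemma conj_eq_self_of_mem_Fbiq (hx : x ∈ Fbiq p) : starRingEnd ℂ x = x := by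
  induction hx using adjoin_induction with
  | mem x hx => rcases hx with rfl | rfl <;> exact conj_ofReal _
  | algebraMap x => exact map_ratCast _ x
  | add x y _ _ hx hy => rw [map_add, hx, hy]
  | mul x y _ _ hx hy => rw [map_mul, hx, hy]
  | inv x _ hx => rw [map_inv₀, hx]

lemma I_sq_eq_algebraMap : I ^ 2 = algebraMap (Fbiq p) ℂ (-1) := by
  rw [I_sq, map_neg, map_one]

lemma mem_Fbiq_of_conj_eq_self (hx : x ∈ kstar p) (h : starRingEnd ℂ x = x) : x ∈ Fbiq p := by
  obtain ⟨a, b, rfl⟩ := exists_eq_add_mul_of_mem_adjoin I_sq_eq_algebraMap (mem_kstar_iff.mp hx)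
  have hconj (c : Fbiq p) : starRingEnd ℂ (algebraMap (Fbiq p) ℂ c) = algebraMap (Fbiq p) ℂ c :=
    conj_eq_self_of_mem_Fbiq c.2
  have hb : algebraMap (Fbiq p) ℂ b = 0 := by
    rw [map_add, map_mul, hconj, hconj, conj_I] at h
    linear_combination (I / 2) * h + algebraMap (Fbiq p) ℂ b * I_sq
  rw [hb, zero_mul, add_zero]
  exact a.2

lemma not_isSquare_three_Fbiq (hp : p % 4 = 1) : ¬ IsSquare (3 : Fbiq p) := by
  rintro ⟨z, hz⟩
  have hz' : (z : ℂ) ^ 2 = algebraMap ℚ⟮(√p : ℂ)⟯ ℂ 3 := by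
    rw [map_ofNat, sq]; exact (congrArg Subtype.val hz).symm
  have hd := ofReal_sqrt_natCast_sq p
  rcases isSquare_or_isSquare_mul_of_sq_mem_adjoin two_ne_zero
    (e := 2) (by rw [map_ofNat, ofReal_sqrt_two_sq]) (mem_Fbiq_iff.mp z.2) hz' with h | h
  · exact not_isSquare_natCast_adjoin_of_mod_four hp hd (n := 3) (.inr rfl) (by exact_mod_cast h)
  · refine not_isSquare_natCast_adjoin_of_mod_four hp hd (n := 6) (.inl rfl) ?_
    norm_num at h
    exact_mod_cast h

lemma not_isSquare_neg_three_kstar (hp : p % 4 = 1) : ¬ IsSquare (-3 : kstar p) := by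
  rintro ⟨z, hz⟩
  have hz' : (z : ℂ) ^ 2 = algebraMap (Fbiq p) ℂ (-3) := by
    rw [map_neg, map_ofNat, sq]; exact (congrArg Subtype.val hz).symm
  rcases isSquare_or_isSquare_mul_of_sq_mem_adjoin two_ne_zero
    I_sq_eq_algebraMap (mem_kstar_iff.mp z.2) hz' with ⟨y, hy⟩ | h
  · have hre : (y : ℂ) = (y : ℂ).re := (conj_eq_iff_re.mp (conj_eq_self_of_mem_Fbiq y.2)).symm
    have hyC : (-3 : ℂ) = y * y := congrArg Subtype.val hy
    rw [hre] at hyC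
    have hyR : (-3 : ℝ) = (y : ℂ).re * (y : ℂ).re := by exact_mod_cast hyC
    linarith [mul_self_nonneg (y : ℂ).re]
  · exact not_isSquare_three_Fbiq hp (by simpa using h)

lemma exists_sq_eq_algebraMap_of_mem_generators (s : ℂ) (hs : s ∈ ({↑√2, ↑√p, I} : Set ℂ)) :
    ∃ e : ℚ, s ^ 2 = algebraMap ℚ ℂ e := by
  rcases hs with rfl | rfl | rfl
  · exact ⟨2, by rw [map_ofNat, ofReal_sqrt_two_sq]⟩
  · exact ⟨p, by rw [map_natCast, ofReal_sqrt_natCast_sq]⟩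
  · exact ⟨-1, by rw [map_neg, map_one, I_sq]⟩

end Fields

section CM

variable (p : ℕ)

instance : IsAbelianGalois ℚ (kstar p) :=
  isAbelianGalois_adjoin exists_sq_eq_algebraMap_of_mem_generators

instance : NumberField (kstar p) where
  to_finiteDimensional := finiteDimensional_adjoin fun s hs =>
    have ⟨_, he⟩ := exists_sq_eq_algebraMap_of_mem_generators s hs
    isIntegral_of_sq_eq_algebraMap he

instance : IsTotallyComplex (kstar p) where
  isComplex v := by
    rw [← InfinitePlace.not_isReal_iff_isComplex]
    rintro ⟨φ, hφ, -⟩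
    let i : kstar p := ⟨I, subset_adjoin _ _ (by simp)⟩
    have hi : i ^ 2 = -1 := Subtype.ext I_sq
    have hre : φ i = (φ i).re := (conj_eq_iff_re.mp (DFunLike.congr_fun hφ i)).symm
    have h := congrArg φ hi
    rw [map_pow, hre, map_neg, map_one] at h
    have : (φ i).re ^ 2 = -1 := by exact_mod_cast h
    linarith [sq_nonneg (φ i).re]

instance : IsCMField (kstar p) := .of_isAbelianGalois _

end CM

section EighthRootsOfUnity

lemma isPrimitiveRoot_zeta8 : IsPrimitiveRoot zeta8 8 := by
  have h : zeta8 = exp (2 * Real.pi * I / (8 : ℕ)) := by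
    rw [zeta8]; congr 1; push_cast; ring
  exact h ▸ Complex.isPrimitiveRoot_exp 8 (by norm_num)

lemma zeta8_eq : zeta8 = √2 / 2 * (1 + I) := by
  have h : zeta8 = exp ((Real.pi / 4 : ℝ) * I) := by
    rw [zeta8]; congr 1; push_cast; ring
  rw [h, exp_mul_I, ← ofReal_cos, ← ofReal_sin, Real.cos_pi_div_four, Real.sin_pi_div_four]
  push_cast
  ring

lemma zeta8_mem_kstar (p : ℕ) : zeta8 ∈ kstar p := by
  rw [zeta8_eq]
  refine mul_mem (div_mem ?_ (ofNat_mem _ 2)) (add_mem (one_mem _) ?_) <;>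
    exact subset_adjoin _ _ (by simp)

lemma zeta8_ne_zero : zeta8 ≠ 0 := exp_ne_zero _

lemma isAlgebraicUnit_zeta8 : IsAlgebraicUnit zeta8 :=
  .of_pow_eq_one (by norm_num) isPrimitiveRoot_zeta8.pow_eq_one

lemma exists_units_eq_zeta8 (p : ℕ) :
    ∃ ζ : (𝓞 (kstar p))ˣ, (((ζ : 𝓞 (kstar p)) : kstar p) : ℂ) = zeta8 :=
  isAlgebraicUnit_zeta8.exists_units_eq_coe (zeta8_mem_kstar p)

lemma conj_zeta8 : starRingEnd ℂ zeta8 = zeta8⁻¹ := by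
  refine eq_inv_of_mul_eq_one_left ?_
  rw [zeta8_eq]
  simp only [map_mul, map_div₀, map_add, map_one, conj_ofReal, conj_I, map_ofNat]
  linear_combination (1 - I ^ 2) / 4 * ofReal_sqrt_two_sq - 1 / 2 * I_sq

lemma one_add_zeta8_sq : (1 + zeta8) ^ 2 = zeta8 * (2 + √2) := by
  rw [zeta8_eq]
  linear_combination (1 + 2 * I + I ^ 2 - 2 * (1 + I)) / 4 * ofReal_sqrt_two_sq + 1 / 2 * I_sq

lemma one_add_zeta8_ne_zero : 1 + zeta8 ≠ 0 := by
  intro h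
  have hsq : zeta8 ^ 2 = 1 := by linear_combination (zeta8 - 1) * h
  have := isPrimitiveRoot_zeta8.dvd_of_pow_eq_one 2 hsq
  norm_num at this

end EighthRootsOfUnity

section Decomposition

variable {p : ℕ} {z : ℂ}

lemma exists_eq_zeta8_pow_mul_conj (hp : p % 4 = 1) (u : (𝓞 (kstar p))ˣ) :
    ∃ k : ℕ, (((u : 𝓞 (kstar p)) : kstar p) : ℂ) =
      zeta8 ^ k * starRingEnd ℂ (((u : 𝓞 (kstar p)) : kstar p) : ℂ) := by
  obtain ⟨n, hn, hu⟩ := exists_div_complexConj_pow_eq_one u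
  have h8 := pow_eight_eq_one (K := kstar p)
    (algEquiv_adjoin_mul_self exists_sq_eq_algebraMap_of_mem_generators)
    (not_isSquare_neg_three_kstar hp) hn hu
  have hz := (IsAlgebraicUnit.coe_units u).ne_zero
  generalize ((u : 𝓞 (kstar p)) : kstar p) = z at h8 hz
  have hconj : ((IsCMField.complexConj (kstar p) z : kstar p) : ℂ) = starRingEnd ℂ (z : ℂ) :=
    IsCMField.complexEmbedding_complexConj (kstar p) (algebraMap (kstar p) ℂ) z
  have h8' : ((z : ℂ) / starRingEnd ℂ (z : ℂ)) ^ 8 = 1 := by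
    rw [← hconj]
    exact congrArg Subtype.val h8
  obtain ⟨k, -, hk⟩ := isPrimitiveRoot_zeta8.eq_pow_of_pow_eq_one h8'
  exact ⟨k, (div_eq_iff (by simpa using hz)).mp hk.symm⟩

lemma div_zeta8_pow_eq_mul_conj {m r : ℕ} (h : z = zeta8 ^ (2 * m + r) * starRingEnd ℂ z) :
    z / zeta8 ^ m = zeta8 ^ r * starRingEnd ℂ (z / zeta8 ^ m) := by
  rw [div_eq_iff (pow_ne_zero m zeta8_ne_zero), map_div₀, map_pow, conj_zeta8, inv_pow,
    div_inv_eq_mul]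
  linear_combination h

lemma div_one_add_zeta8_mem_Fbiq (hz : z ∈ kstar p) (h : z = zeta8 * starRingEnd ℂ z) :
    z / (1 + zeta8) ∈ Fbiq p := by
  refine mem_Fbiq_of_conj_eq_self (div_mem hz (add_mem (one_mem _) (zeta8_mem_kstar p))) ?_
  have hconj : starRingEnd ℂ (1 + zeta8) = (1 + zeta8) / zeta8 := by
    rw [map_add, map_one, conj_zeta8, add_div, div_self zeta8_ne_zero, one_div, add_comm]
  rw [map_div₀, hconj, div_div_eq_mul_div, mul_comm, ← h]

/- Otherwise `(2 + √2) * a ^ 2` would be a unit for `a = z / (1 + ζ₈) ∈ F`. -/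
lemma ne_zeta8_mul_conj (hp : p % 4 = 1) (hz : z ∈ kstar p) (hu : IsAlgebraicUnit z) :
    z ≠ zeta8 * starRingEnd ℂ z := by
  intro h
  have ha := mem_Fbiq_iff.mp (div_one_add_zeta8_mem_Fbiq hz h)
  refine not_isAlgebraicUnit_two_add_mul_sq hp (ofReal_sqrt_natCast_sq p) ofReal_sqrt_two_sq ha ?_
  have hsq : (2 + √2) * (z / (1 + zeta8)) ^ 2 = z ^ 2 / zeta8 := by
    have := zeta8_ne_zero
    have := one_add_zeta8_ne_zero
    field_simp
    rw [one_add_zeta8_sq]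
    ring
  exact hsq ▸ (hu.pow 2).div isAlgebraicUnit_zeta8

lemma exists_eq_zeta8_pow_mul_units (hp : p % 4 = 1) (u : (𝓞 (kstar p))ˣ) :
    ∃ (n : ℕ) (v : (𝓞 (Fbiq p))ˣ), (((u : 𝓞 (kstar p)) : kstar p) : ℂ) =
      zeta8 ^ n * (((v : 𝓞 (Fbiq p)) : Fbiq p) : ℂ) := by
  obtain ⟨k, hk⟩ := exists_eq_zeta8_pow_mul_conj hp u
  have hu : IsAlgebraicUnit (((u : 𝓞 (kstar p)) : kstar p) : ℂ) :=
    (IsAlgebraicUnit.map_iff (algebraMap (kstar p) ℂ)).mpr (.coe_units u)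
  have hmem (m : ℕ) := div_mem (SetLike.coe_mem ((u : 𝓞 (kstar p)) : kstar p))
    (pow_mem (zeta8_mem_kstar p) m)
  have hunit (m : ℕ) := hu.div (isAlgebraicUnit_zeta8.pow m)
  obtain ⟨m, rfl | rfl⟩ := k.even_or_odd'
  · have hreal := div_zeta8_pow_eq_mul_conj (r := 0) hk
    rw [pow_zero, one_mul] at hreal
    obtain ⟨v, hv⟩ := (hunit m).exists_units_eq_coe (mem_Fbiq_of_conj_eq_self (hmem m) hreal.symm)
    exact ⟨m, v, by rw [hv, mul_div_cancel₀ _ (pow_ne_zero m zeta8_ne_zero)]⟩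
  · have hodd := div_zeta8_pow_eq_mul_conj hk
    rw [pow_one] at hodd
    exact absurd hodd (ne_zeta8_mul_conj hp (hmem m) (hunit m))

end Decomposition

theorem statement_5_general (p : ℕ) (hp : p % 4 = 1) :
    (∀ u : (𝓞 (kstar p))ˣ, ∃ (n : ℕ) (v : (𝓞 (Fbiq p))ˣ),
      (((u : 𝓞 (kstar p)) : kstar p) : ℂ) =
        zeta8 ^ n * (((v : 𝓞 (Fbiq p)) : Fbiq p) : ℂ)) ∧
    (Subgroup.closure {u : (𝓞 (kstar p))ˣ |
        (∃ n : ℕ, (((u : 𝓞 (kstar p)) : kstar p) : ℂ) = zeta8 ^ n) ∨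
        ∃ v : (𝓞 (Fbiq p))ˣ, (((u : 𝓞 (kstar p)) : kstar p) : ℂ) =
          (((v : 𝓞 (Fbiq p)) : Fbiq p) : ℂ)}).index = 1 := by
  refine ⟨exists_eq_zeta8_pow_mul_units hp, ?_⟩
  rw [Subgroup.index_eq_one, eq_top_iff]
  intro u _
  obtain ⟨n, v, huv⟩ := exists_eq_zeta8_pow_mul_units hp u
  obtain ⟨ζ, hζ⟩ := exists_units_eq_zeta8 p
  have hζn : (((ζ ^ n : (𝓞 (kstar p))ˣ) : 𝓞 (kstar p)) : kstar p) = zeta8 ^ n := by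
    rw [← hζ]
    rfl
  rw [← mul_inv_cancel_left (ζ ^ n) u]
  refine mul_mem (Subgroup.subset_closure (.inl ⟨n, hζn⟩))
    (Subgroup.subset_closure (.inr ⟨v, ?_⟩))
  refine mul_left_cancel₀ (pow_ne_zero n zeta8_ne_zero) ?_
  rw [← huv, ← hζn]
  exact congrArg (fun w : (𝓞 (kstar p))ˣ => (((w : 𝓞 (kstar p)) : kstar p) : ℂ))
    (mul_inv_cancel_left (ζ ^ n) u)

theorem statement_5 (p : ℕ) (hp : p.Prime) (hp8 : p % 8 = 1)
    (hle : Fbiq p ≤ kstar p) :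
    (∀ u : (𝓞 (kstar p))ˣ, ∃ (n : ℕ) (v : (𝓞 (Fbiq p))ˣ),
      (((u : 𝓞 (kstar p)) : kstar p) : ℂ) =
        zeta8 ^ n * (((v : 𝓞 (Fbiq p)) : Fbiq p) : ℂ)) ∧
    (Subgroup.closure {u : (𝓞 (kstar p))ˣ |
        (∃ n : ℕ, (((u : 𝓞 (kstar p)) : kstar p) : ℂ) = zeta8 ^ n) ∨
        ∃ v : (𝓞 (Fbiq p))ˣ, (((u : 𝓞 (kstar p)) : kstar p) : ℂ) =
          (((v : 𝓞 (Fbiq p)) : Fbiq p) : ℂ)}).index = 1 :=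
  statement_5_general p (by omega)
end
end
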